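/- arXiv:2007.08079 — 2 statements merged into one kernel-verified Lean document; each statement's English description precedes it below -/
import Mathlib

section
/- Let E₁ and E₂ be ellipsoids in ℝⁿ, n ≥ 2, centered at the origin, and let i₁, …, iₙ be n distinct nonzero real numbers in the interval (−2, n]. If Ṽ_{i_k}(E₁) = Ṽ_{i_k}(E₂) for every k = 1, …, n, then E₁ and E₂ are congruent; equivalently, the multisets of semiaxes of E₁ and E₂ coincide. -/
/-!
Write the ellipsoids as `{∑ α_j x_j² ≤ 1}` and `{∑ β_j x_j² ≤ 1}` with quadratic forms `Q_α`,
`Q_β`, and let `P_α(t) = ∏ (1 + α_j t)`. The dual volume of index `2 s` is a multiple of the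
integral of `Q_α ^ (-s)` over the sphere, which by Tonelli is, up to a factor independent of `α`,
the Mellin transform at `s` of `t ↦ ∫ (1 + t Q_α(θ)) ^ (-n/2) dθ` (for `s < 0` the kernel has to be
regularized by subtracting `1`). On the unit sphere `1 + t Q_α` is again a diagonal quadratic form,
so the volume of an ellipsoid identifies the inner integral with a multiple of `P_α(t) ^ (-1/2)`.
Hence the Mellin transform of `P_α ^ (-1/2) - P_β ^ (-1/2)` vanishes at every
`s_k = i_k / 2 < n / 2`, while a possible index `s_k = n / 2` says that `P_α` and `P_β` have the
same leading coefficient.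

In either case `P_α ^ (-1/2) - P_β ^ (-1/2) = t q(t) w(t)` with `w > 0` and `q` a polynomial of
degree smaller than the number `m` of the remaining exponents `s_k`, and `q` is orthogonal to all
the `t ^ s_k w`. If `q ≠ 0`, then the `m × m` matrix pairing these functions with the powers
`1, t, …, t ^ (m - 1)` is singular, so some nontrivial combination `g` of the functions is
orthogonal to all polynomials of degree `< m`. But the `t ^ s_k w` form a Chebyshev system: `g` has
fewer than `m` zeros, and a polynomial with roots exactly at its sign changes has a nonzero integral
against `g`. So `q = 0` and `P_α = P_β`.
-/

open MeasureTheory Real Set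

noncomputable def sphereMeasure (n : ℕ) :
    Measure (Metric.sphere (0 : EuclideanSpace ℝ (Fin n)) 1) :=
  (volume : Measure (EuclideanSpace ℝ (Fin n))).toSphere

noncomputable def radial {n : ℕ} (K : Set (EuclideanSpace ℝ (Fin n)))
    (x : EuclideanSpace ℝ (Fin n)) : ℝ :=
  sSup {t : ℝ | 0 ≤ t ∧ t • x ∈ K}

noncomputable def dualVolume (n : ℕ) (i : ℝ) (K : Set (EuclideanSpace ℝ (Fin n))) : ℝ :=
  (1 / n) * ∫ θ : Metric.sphere (0 : EuclideanSpace ℝ (Fin n)) 1,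
    radial K (θ : EuclideanSpace ℝ (Fin n)) ^ i ∂(sphereMeasure n)

def ellipsoidSet {n : ℕ} (a : Fin n → ℝ) : Set (EuclideanSpace ℝ (Fin n)) :=
  {x | ∑ j, (x j) ^ 2 / (a j) ^ 2 ≤ 1}

open Asymptotics Filter Topology
open Metric (sphere ball)
open scoped Polynomial Finset Pointwise

/-! ### Chebyshev systems of powers -/

theorem exists_strictMono_deriv_eq_zero {h : ℝ → ℝ} (hc : Continuous h) {m : ℕ}
    {x : Fin (m + 1) → ℝ} (hx : StrictMono x) (h0 : ∀ l, h (x l) = 0) :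
    ∃ y : Fin m → ℝ, StrictMono y ∧ ∀ l, deriv h (y l) = 0 := by
  have rolle (l : Fin m) : ∃ y ∈ Ioo (x l.castSucc) (x l.succ), deriv h y = 0 :=
    exists_deriv_eq_zero (hx Fin.castSucc_lt_succ) hc.continuousOn ((h0 _).trans (h0 _).symm)
  choose y hy hy0 using rolle
  refine ⟨y, fun l l' hl => ?_, hy0⟩
  calc y l < x l.succ := (hy l).2
    _ ≤ x l'.castSucc := hx.monotone (Fin.succ_le_castSucc_iff.2 hl)
    _ < y l' := (hy l').1

theorem eq_zero_of_sum_mul_exp_eq_zero {m : ℕ} {s c x : Fin m → ℝ} (hs : Function.Injective s)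
    (hx : StrictMono x) (h : ∀ l, ∑ k, c k * exp (s k * x l) = 0) : c = 0 := by
  induction m with
  | zero => exact Subsingleton.elim _ _
  | succ m ih =>
    -- Dividing by `exp (s 0 * y)` makes one term constant, so differentiation removes it.
    let f : ℝ → ℝ := fun y => ∑ k, c k * exp ((s k - s 0) * y)
    have hf0 (l) : f (x l) = 0 := by
      have : f (x l) = exp (-(s 0 * x l)) * ∑ k, c k * exp (s k * x l) := by
        simp only [f, Finset.mul_sum]
        refine Finset.sum_congr rfl fun k _ => ?_
        rw [mul_left_comm, ← exp_add]
        ring_nf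
      rw [this, h, mul_zero]
    have hf' (y) : HasDerivAt f (∑ k, c k * (exp ((s k - s 0) * y) * (s k - s 0))) y :=
      HasDerivAt.fun_sum fun k _ =>
        (((hasDerivAt_id' y).const_mul _).exp.const_mul (c k)).congr_deriv (by ring)
    have hfc : Continuous f := continuous_iff_continuousAt.2 fun y => (hf' y).continuousAt
    obtain ⟨y, hy, hy0⟩ := exists_strictMono_deriv_eq_zero hfc hx hf0
    have hsucc : (fun k : Fin m => c k.succ * (s k.succ - s 0)) = 0 := by
      refine ih (s := fun k => s k.succ - s 0) (fun k k' hk => ?_) hy fun l => ?_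
      · exact Fin.succ_injective _ (hs (sub_left_injective hk))
      · rw [← hy0 l, (hf' (y l)).deriv, Fin.sum_univ_succ]
        simp only [sub_self, mul_zero, zero_add]
        exact Finset.sum_congr rfl fun k _ => by ring
    have hc (k : Fin m) : c k.succ = 0 :=
      (mul_eq_zero.1 (congrFun hsucc k)).resolve_right
        (sub_ne_zero.2 (hs.ne (Fin.succ_ne_zero k)))
    have hc0 : c 0 = 0 := by
      simpa [Fin.sum_univ_succ, hc] using h 0
    funext k
    exact Fin.cases hc0 hc k

/-- A Chebyshev system on `D`: a nontrivial linear combination of the `m` functions `f k` has fewer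
than `m` zeros in `D`. -/
def IsChebyshevSystem {m : ℕ} (f : Fin m → ℝ → ℝ) (D : Set ℝ) : Prop :=
  ∀ c : Fin m → ℝ, c ≠ 0 → {t ∈ D | ∑ k, c k * f k t = 0}.encard < m

theorem isChebyshevSystem_rpow {m : ℕ} {s : Fin m → ℝ} (hs : Function.Injective s) :
    IsChebyshevSystem (fun k t => t ^ s k) (Ioi 0) := by
  intro c hc
  contrapose! hc
  obtain ⟨Z, hZ, hcard⟩ := exists_subset_encard_eq hc
  lift Z to Finset ℝ using finite_of_encard_eq_coe hcard
  rw [encard_coe_eq_coe_finsetCard, Nat.cast_inj] at hcard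
  have hmem (l) : 0 < Z.orderEmbOfFin hcard l ∧ ∑ k, c k * Z.orderEmbOfFin hcard l ^ s k = 0 :=
    hZ (Z.orderEmbOfFin_mem hcard l)
  -- The substitution `t = exp x` turns power sums into exponential sums.
  refine eq_zero_of_sum_mul_exp_eq_zero (x := fun l => log (Z.orderEmbOfFin hcard l)) hs
    (fun l l' hl => log_lt_log (hmem l).1 ((Z.orderEmbOfFin hcard).strictMono hl)) fun l => ?_
  simp_rw [mul_comm (s _), ← rpow_def_of_pos (hmem l).1]
  exact (hmem l).2

theorem IsChebyshevSystem.mul_right {m : ℕ} {f : Fin m → ℝ → ℝ} {D : Set ℝ}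
    (hf : IsChebyshevSystem f D) {w : ℝ → ℝ} (hw : ∀ t ∈ D, w t ≠ 0) :
    IsChebyshevSystem (fun k t => f k t * w t) D := by
  refine fun c hc => lt_of_le_of_lt (encard_le_encard ?_) (hf c hc)
  rintro t ⟨ht, h0⟩
  simp_rw [← mul_assoc, ← Finset.sum_mul] at h0
  exact ⟨ht, (mul_eq_zero.1 h0).resolve_right (hw t ht)⟩

theorem forall_pos_or_forall_neg_of_isPreconnected {X : Type*} [TopologicalSpace X] {D : Set X}
    (hD : IsPreconnected D) {g : X → ℝ} (hg : ContinuousOn g D) (hg0 : ∀ x ∈ D, g x ≠ 0) :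
    (∀ x ∈ D, 0 < g x) ∨ ∀ x ∈ D, g x < 0 := by
  by_contra! ⟨⟨x, hx, hgx⟩, y, hy, hgy⟩
  obtain ⟨z, hz, hgz⟩ := hD.intermediate_value hx hy hg ⟨hgx, hgy⟩
  exact hg0 z hz hgz

/- Walking through `Z` in increasing order, a factor `z - X` is inserted whenever `g` changes sign
at `z`. -/
theorem exists_polynomial_mul_pos {g : ℝ → ℝ} {D : Set ℝ} (hD : D.OrdConnected)
    (hg : ContinuousOn g D) (Z : Finset ℝ) (hg0 : ∀ t ∈ D, t ∉ Z → g t ≠ 0) :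
    ∃ p : ℝ[X], p.natDegree ≤ #Z ∧ (∀ t ∉ Z, p.eval t ≠ 0) ∧
      ∀ t ∈ D, t ∉ Z → 0 < g t * p.eval t := by
  induction Z using Finset.induction_on_max generalizing D with
  | empty =>
    rcases forall_pos_or_forall_neg_of_isPreconnected hD.isPreconnected hg
      (fun t ht => hg0 t ht (Finset.notMem_empty t)) with h | h
    · exact ⟨1, by simp, by simp, fun t ht _ => by simpa using h t ht⟩
    · exact ⟨-1, by simp, by simp, fun t ht _ => by simpa using h t ht⟩
  | insert z Z hz ih =>
    have hgt {t : ℝ} (ht : z < t) : t ∉ Z := fun h => lt_asymm ht (hz t h)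
    have hcard : #(insert z Z) = #Z + 1 :=
      Finset.card_insert_of_notMem fun h => lt_irrefl _ (hz z h)
    simp only [Finset.mem_insert, not_or, and_imp, hcard] at hg0 ⊢
    obtain ⟨p, hdeg, hp0, hpos⟩ := ih (hD.inter ordConnected_Iio) (hg.mono inter_subset_left)
      fun t ht => hg0 t ht.1 ht.2.ne
    have hright : (∀ t ∈ D ∩ Ioi z, 0 < g t * p.eval t) ∨ ∀ t ∈ D ∩ Ioi z, g t * p.eval t < 0 :=
      forall_pos_or_forall_neg_of_isPreconnected (hD.inter ordConnected_Ioi).isPreconnected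
        ((hg.mono inter_subset_left).mul p.continuous.continuousOn)
        fun t ht => mul_ne_zero (hg0 t ht.1 ht.2.ne' (hgt ht.2)) (hp0 t (hgt ht.2))
    rcases hright with h | h
    · refine ⟨p, by lia, fun t _ => hp0 t, fun t ht htz htZ => ?_⟩
      rcases lt_or_gt_of_ne htz with hlt | hgt
      · exact hpos t ⟨ht, hlt⟩ htZ
      · exact h t ⟨ht, hgt⟩
    · refine ⟨p * (Polynomial.C z - Polynomial.X), ?_, fun t htz htZ => ?_, fun t ht htz htZ => ?_⟩
      · have : (Polynomial.C z - Polynomial.X).natDegree ≤ 1 := by compute_degree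
        exact Polynomial.natDegree_mul_le.trans (by lia)
      · simpa using ⟨hp0 t htZ, sub_ne_zero.2 (Ne.symm htz)⟩
      · rw [Polynomial.eval_mul, ← mul_assoc, Polynomial.eval_sub, Polynomial.eval_C,
          Polynomial.eval_X]
        rcases lt_or_gt_of_ne htz with hlt | hgt
        · exact mul_pos (hpos t ⟨ht, hlt⟩ htZ) (sub_pos.2 hlt)
        · exact mul_pos_of_neg_of_neg (h t ⟨ht, hgt⟩) (sub_neg.2 hgt)

theorem exists_sum_smul_eq_zero_of_forall_apply_eq_zero {K V ι : Type*} [Field K] [AddCommGroup V]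
    [Module K V] [FiniteDimensional K V] [Fintype ι] (hι : Fintype.card ι = Module.finrank K V)
    (L : ι → Module.Dual K V) {v : V} (hv : v ≠ 0) (h : ∀ k, L k v = 0) :
    ∃ c : ι → K, c ≠ 0 ∧ ∑ k, c k • L k = 0 := by
  by_contra! hL
  have hli : LinearIndependent K L :=
    Fintype.linearIndependent_iff.2 fun c hc => congrFun (not_imp_not.1 (hL c) hc)
  have hspan : Submodule.span K (range L) = ⊤ :=
    hli.span_eq_top_of_card_eq_finrank' (hι.trans Subspace.dual_finrank_eq.symm)
  have hker : Submodule.span K (range L) ≤ LinearMap.ker (Module.Dual.eval K V v) :=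
    Submodule.span_le.2 (range_subset_iff.2 h)
  refine hv ((Module.forall_dual_apply_eq_zero_iff K v).1 fun φ => hker ?_)
  rw [hspan]
  trivial

theorem integrable_mul_eval {μ : Measure ℝ} {m : ℕ} {f : ℝ → ℝ}
    (hf : ∀ j < m, Integrable (fun t => f t * t ^ j) μ) {p : ℝ[X]} (hp : p.degree < m) :
    Integrable (fun t => f t * p.eval t) μ := by
  simp_rw [Polynomial.eval_eq_sum_degreeLTEquiv (Polynomial.mem_degreeLT.2 hp), Finset.mul_sum,
    mul_left_comm (f _)]
  exact integrable_finsetSum _ fun j _ => (hf j j.2).const_mul _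

theorem exists_sum_integral_mul_eval_eq_zero {μ : Measure ℝ} {m : ℕ} {f : Fin m → ℝ → ℝ}
    (hint : ∀ k, ∀ j < m, Integrable (fun t => f k t * t ^ j) μ)
    {q : ℝ[X]} (hq : q.degree < m) (hq0 : q ≠ 0) (h : ∀ k, ∫ t, f k t * q.eval t ∂μ = 0) :
    ∃ c : Fin m → ℝ, c ≠ 0 ∧ ∀ p : ℝ[X], p.degree < m →
      ∫ t, (∑ k, c k * f k t) * p.eval t ∂μ = 0 := by
  have hint' (k) (p : ℝ[X]_m) : Integrable (fun t => f k t * p.1.eval t) μ :=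
    integrable_mul_eval (hint k) (Polynomial.mem_degreeLT.1 p.2)
  let L (k : Fin m) : Module.Dual ℝ ℝ[X]_m :=
    { toFun p := ∫ t, f k t * p.1.eval t ∂μ
      map_add' p r := by
        rw [← integral_add (hint' k p) (hint' k r)]
        simp [mul_add]
      map_smul' r p := by
        simp [mul_left_comm, integral_const_mul] }
  have : FiniteDimensional ℝ ℝ[X]_m := .of_injective (Polynomial.degreeLTEquiv ℝ m).toLinearMap
    (Polynomial.degreeLTEquiv ℝ m).injective
  have hcard : Fintype.card (Fin m) = Module.finrank ℝ ℝ[X]_m := by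
    rw [(Polynomial.degreeLTEquiv ℝ m).finrank_eq, Module.finrank_fin_fun, Fintype.card_fin]
  obtain ⟨c, hc, hcL⟩ := exists_sum_smul_eq_zero_of_forall_apply_eq_zero hcard L
    (v := ⟨q, Polynomial.mem_degreeLT.2 hq⟩) (by simpa using hq0) h
  refine ⟨c, hc, fun p hp => ?_⟩
  let p' : ℝ[X]_m := ⟨p, Polynomial.mem_degreeLT.2 hp⟩
  simp_rw [Finset.sum_mul, mul_assoc]
  rw [integral_finsetSum _ fun k _ => (hint' k p').const_mul _]
  simp_rw [integral_const_mul]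
  simpa [L, p'] using DFunLike.congr_fun hcL p'

theorem IsChebyshevSystem.eq_zero_of_integral_mul_eval_eq_zero {m : ℕ} {f : Fin m → ℝ → ℝ}
    {D : Set ℝ} (hf : IsChebyshevSystem f D) (hD : D.OrdConnected)
    (hfc : ∀ k, ContinuousOn (f k) D) {μ : Measure ℝ} [NullSingletonClass μ] (hμ : μ D ≠ 0)
    (hint : ∀ k, ∀ j < m, IntegrableOn (fun t => f k t * t ^ j) D μ)
    {q : ℝ[X]} (hq : q.degree < m) (h : ∀ k, ∫ t in D, f k t * q.eval t ∂μ = 0) : q = 0 := by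
  by_contra hq0
  obtain ⟨c, hc, hcp⟩ := exists_sum_integral_mul_eval_eq_zero hint hq hq0 h
  let g (t : ℝ) : ℝ := ∑ k, c k * f k t
  have hZ : {t ∈ D | g t = 0}.encard < m := hf c hc
  lift {t ∈ D | g t = 0} to Finset ℝ using finite_of_encard_le_coe hZ.le with Z hZdef
  rw [encard_coe_eq_coe_finsetCard, Nat.cast_lt] at hZ
  have hg0 (t) (ht : t ∈ D) (htZ : t ∉ Z) : g t ≠ 0 := fun h0 => by
    rw [← Finset.mem_coe, hZdef] at htZ
    exact htZ ⟨ht, h0⟩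
  obtain ⟨p, hpdeg, -, hp⟩ := exists_polynomial_mul_pos hD (g := g)
    (continuousOn_finsetSum _ fun k _ => continuousOn_const.mul (hfc k)) Z hg0
  have hpm : p.degree < m :=
    p.degree_le_natDegree.trans_lt (WithBot.coe_lt_coe.2 (hpdeg.trans_lt hZ))
  have hpos : ∀ᵐ t ∂μ.restrict D, 0 < g t * p.eval t := by
    filter_upwards [ae_restrict_mem hD.measurableSet,
      ae_restrict_of_ae (Z.finite_toSet.countable.ae_notMem μ)] with t ht htZ using hp t ht htZ
  have hgint : IntegrableOn (fun t => g t * p.eval t) D μ := by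
    simp_rw [g, Finset.sum_mul, mul_assoc]
    exact integrable_finsetSum _ fun k _ => (integrable_mul_eval (hint k) hpm).const_mul _
  have hzero := (integral_eq_zero_iff_of_nonneg_ae (hpos.mono fun _ => le_of_lt) hgint).1
    (hcp p hpm)
  have := ae_restrict_neBot.2 hμ
  obtain ⟨t, ht, ht'⟩ := (hpos.and hzero).exists
  exact ht.ne' ht'

/-! ### Differences of inverse square roots of polynomials -/

theorem inv_sqrt_sub_inv_sqrt {x y : ℝ} (hx : 0 < x) (hy : 0 < y) :
    (√x)⁻¹ - (√y)⁻¹ = (y - x) * (√x * √y * (√x + √y))⁻¹ := by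
  calc (√x)⁻¹ - (√y)⁻¹ = (√y ^ 2 - √x ^ 2) * (√x * √y * (√x + √y))⁻¹ := by
        field_simp
        ring
    _ = (y - x) * (√x * √y * (√x + √y))⁻¹ := by rw [sq_sqrt hx.le, sq_sqrt hy.le]

/-- The factor by which `(√A)⁻¹ - (√B)⁻¹` differs from the polynomial `B - A`. -/
noncomputable def invSqrtDiffWeight (A B : ℝ[X]) (t : ℝ) : ℝ :=
  (√(A.eval t) * √(B.eval t) * (√(A.eval t) + √(B.eval t)))⁻¹

theorem invSqrtDiffWeight_pos {A B : ℝ[X]} {t : ℝ} (hA : 0 < A.eval t) (hB : 0 < B.eval t) :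
    0 < invSqrtDiffWeight A B t := by
  unfold invSqrtDiffWeight
  positivity

theorem continuousAt_invSqrtDiffWeight {A B : ℝ[X]} {t : ℝ} (hA : 0 < A.eval t)
    (hB : 0 < B.eval t) : ContinuousAt (invSqrtDiffWeight A B) t := by
  refine ContinuousAt.inv₀ (by fun_prop) ?_
  positivity

theorem isBigO_inv_sqrt_eval_atTop {A : ℝ[X]} {n : ℕ} (hA : ∀ᶠ t in atTop, 0 < A.eval t)
    (hn : n ≤ A.natDegree) : (fun t => (√(A.eval t))⁻¹) =O[atTop] fun t => t ^ (-(n / 2 : ℝ)) := by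
  have hA0 : A ≠ 0 := fun h => by simpa [h] using hA.exists
  have hpow : (fun t : ℝ => t ^ n) =O[atTop] fun t => A.eval t := by
    simpa using Polynomial.isBigO_atTop_of_degree_le (Polynomial.X ^ n) A
      (by simpa [Polynomial.degree_eq_natDegree hA0] using hn)
  have hinv : (fun t => (A.eval t)⁻¹) =O[atTop] fun t => (t ^ n)⁻¹ :=
    hpow.inv_rev ((eventually_gt_atTop 0).mono fun t ht h0 => absurd h0 (pow_pos ht n).ne')
  refine (hinv.sqrt ?_).congr' ?_ ?_
  · filter_upwards [eventually_ge_atTop 0] with t ht using inv_nonneg.2 (pow_nonneg ht n)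
  · exact .of_forall fun t => sqrt_inv _
  · filter_upwards [eventually_gt_atTop 0] with t ht
    rw [sqrt_eq_rpow, ← rpow_natCast, ← rpow_neg ht.le, ← rpow_mul ht.le]
    ring_nf

theorem isBigO_invSqrtDiffWeight_atTop {A B : ℝ[X]} {n : ℕ} (hA : ∀ᶠ t in atTop, 0 < A.eval t)
    (hB : ∀ᶠ t in atTop, 0 < B.eval t) (hnA : n ≤ A.natDegree) (hnB : n ≤ B.natDegree) :
    invSqrtDiffWeight A B =O[atTop] fun t => t ^ (-(3 * (n / 2) : ℝ)) := by
  have hA' := isBigO_inv_sqrt_eval_atTop hA hnA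
  have hle : invSqrtDiffWeight A B =O[atTop]
      fun t => (√(A.eval t))⁻¹ * (√(B.eval t))⁻¹ * (√(A.eval t))⁻¹ := by
    refine .of_norm_eventuallyLE ?_
    filter_upwards [hA, hB] with t hAt hBt
    rw [norm_of_nonneg (invSqrtDiffWeight_pos hAt hBt).le, invSqrtDiffWeight, mul_inv, mul_inv]
    gcongr
    exact le_add_of_nonneg_right (sqrt_nonneg _)
  refine (hle.trans ((hA'.mul (isBigO_inv_sqrt_eval_atTop hB hnB)).mul hA')).congr' .rfl ?_
  filter_upwards [eventually_gt_atTop 0] with t ht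
  rw [← rpow_add ht, ← rpow_add ht]
  ring_nf

theorem integrableOn_rpow_mul_invSqrtDiffWeight {A B : ℝ[X]} {n : ℕ}
    (hA : ∀ t, 0 ≤ t → 0 < A.eval t) (hB : ∀ t, 0 ≤ t → 0 < B.eval t)
    (hnA : n ≤ A.natDegree) (hnB : n ≤ B.natDegree) {s : ℝ} (hs0 : 0 < s) (hs : s < 3 * (n / 2)) :
    IntegrableOn (fun t => t ^ (s - 1) * invSqrtDiffWeight A B t) (Ioi 0) := by
  have hc (t) (ht : 0 ≤ t) := continuousAt_invSqrtDiffWeight (hA t ht) (hB t ht)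
  refine mellin_convergent_of_isBigO_scalar (b := 0) ?_ (isBigO_invSqrtDiffWeight_atTop
    ((eventually_ge_atTop 0).mono hA) ((eventually_ge_atTop 0).mono hB) hnA hnB) hs ?_ hs0
  · exact ContinuousOn.locallyIntegrableOn
      (fun t ht => (hc t (le_of_lt ht)).continuousWithinAt) measurableSet_Ioi
  · simpa using ((hc 0 le_rfl).tendsto.mono_left nhdsWithin_le_nhds).isBigO_one ℝ

theorem isChebyshevSystem_rpow_mul_invSqrtDiffWeight {A B : ℝ[X]} (hA : ∀ t, 0 < t → 0 < A.eval t)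
    (hB : ∀ t, 0 < t → 0 < B.eval t) {m : ℕ} {s : Fin m → ℝ} (hs : Function.Injective s) :
    IsChebyshevSystem (fun k t => t ^ s k * invSqrtDiffWeight A B t) (Ioi 0) :=
  (isChebyshevSystem_rpow hs).mul_right fun t ht => (invSqrtDiffWeight_pos (hA t ht) (hB t ht)).ne'

theorem polynomial_eq_of_integral_inv_sqrt_sub_eq_zero {A B : ℝ[X]} {n : ℕ}
    (hA : ∀ t, 0 ≤ t → 0 < A.eval t) (hB : ∀ t, 0 ≤ t → 0 < B.eval t)
    (hnA : n ≤ A.natDegree) (hnB : n ≤ B.natDegree) (hAB : A.coeff 0 = B.coeff 0) {S : Finset ℝ}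
    (hSn : #S ≤ n) (hdeg : (B - A).natDegree ≤ #S) (hS : ∀ s ∈ S, -1 < s ∧ s < n / 2)
    (h : ∀ s ∈ S, ∫ t in Ioi 0, t ^ (s - 1) * ((√(A.eval t))⁻¹ - (√(B.eval t))⁻¹) = 0) :
    A = B := by
  let s := S.orderEmbOfFin rfl
  have hsmem (k) : s k ∈ S := S.orderEmbOfFin_mem rfl k
  obtain ⟨q, hq⟩ := Polynomial.X_dvd_iff.2 (show (B - A).coeff 0 = 0 by simp [hAB])
  have hqdeg : q.degree < #S := by
    refine (Polynomial.degree_lt_iff_coeff_zero _ _).2 fun j hj => ?_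
    rw [← Polynomial.coeff_X_mul, ← hq]
    exact Polynomial.coeff_eq_zero_of_natDegree_lt (by lia)
  have hsys : IsChebyshevSystem (fun k t => t ^ s k * invSqrtDiffWeight A B t) (Ioi 0) :=
    isChebyshevSystem_rpow_mul_invSqrtDiffWeight (fun t ht => hA t ht.le) (fun t ht => hB t ht.le)
      s.injective
  have hcont (k) : ContinuousOn (fun t => t ^ s k * invSqrtDiffWeight A B t) (Ioi 0) :=
    fun t (ht : 0 < t) => ((continuousAt_rpow_const t _ (.inl ht.ne')).mul
      (continuousAt_invSqrtDiffWeight (hA t ht.le) (hB t ht.le))).continuousWithinAt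
  have hint (k) (j : ℕ) (hj : j < #S) :
      IntegrableOn (fun t => t ^ s k * invSqrtDiffWeight A B t * t ^ j) (Ioi 0) := by
    have hjn : (j : ℝ) + 1 ≤ n := mod_cast hj.trans_le hSn
    have hsk := hS _ (hsmem k)
    refine (integrableOn_rpow_mul_invSqrtDiffWeight hA hB hnA hnB (s := s k + j + 1)
      (by linarith) (by linarith)).congr_fun (fun t (ht : 0 < t) => ?_) measurableSet_Ioi
    simp only [add_sub_cancel_right, rpow_add_natCast ht.ne']
    ring
  have hzero (k) : ∫ t in Ioi 0, t ^ s k * invSqrtDiffWeight A B t * q.eval t = 0 := by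
    refine (setIntegral_congr_fun measurableSet_Ioi fun t (ht : 0 < t) => ?_).trans
      (h _ (hsmem k))
    simp only [inv_sqrt_sub_inv_sqrt (hA t ht.le) (hB t ht.le), ← Polynomial.eval_sub, hq,
      rpow_sub_one ht.ne', Polynomial.eval_mul, Polynomial.eval_X, invSqrtDiffWeight]
    field_simp
  have hq0 : q = 0 :=
    hsys.eq_zero_of_integral_mul_eval_eq_zero ordConnected_Ioi hcont (by simp) hint hqdeg hzero
  rw [hq0, mul_zero, sub_eq_zero] at hq
  exact hq.symm

/-! ### The polynomial of the coefficients -/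

theorem exists_perm_of_map_univ_eq {ι α : Type*} [Fintype ι] {f g : ι → α}
    (h : Finset.univ.val.map f = Finset.univ.val.map g) :
    ∃ σ : Equiv.Perm ι, ∀ j, g j = f (σ j) := by
  classical
  have hcard (x : α) : Fintype.card {j // g j = x} = Fintype.card {j // f j = x} := by
    simpa [Multiset.count_map, Fintype.card_subtype, Finset.card, eq_comm] using
      congrArg (Multiset.count x) h.symm
  let e (x : α) : {j // g j = x} ≃ {j // f j = x} := Fintype.equivOfCardEq (hcard x)
  refine ⟨(Equiv.sigmaFiberEquiv g).symm.trans
    ((Equiv.sigmaCongrRight e).trans (Equiv.sigmaFiberEquiv f)), fun j => ?_⟩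
  exact (e (g j) ⟨j, rfl⟩).2.symm

/-- The polynomial `∏ j, (1 + γ j * X)`, which records the multiset of the `γ j` through its
roots. -/
noncomputable def axisPoly {ι K : Type*} [Fintype ι] [Field K] (γ : ι → K) : K[X] :=
  ∏ j, (Polynomial.C (γ j) * Polynomial.X + Polynomial.C 1)

section axisPoly

variable {ι K : Type*} [Fintype ι] [Field K]

theorem eval_axisPoly (γ : ι → K) (t : K) : (axisPoly γ).eval t = ∏ j, (1 + t * γ j) := by
  simp [axisPoly, Polynomial.eval_prod, mul_comm t, add_comm]

theorem eval_axisPoly_pos {γ : ι → ℝ} (hγ : ∀ j, 0 < γ j) {t : ℝ} (ht : 0 ≤ t) :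
    0 < (axisPoly γ).eval t := by
  rw [eval_axisPoly]
  exact Finset.prod_pos fun j _ => add_pos_of_pos_of_nonneg one_pos (mul_nonneg ht (hγ j).le)

theorem natDegree_axisPoly {γ : ι → K} (hγ : ∀ j, γ j ≠ 0) :
    (axisPoly γ).natDegree = Fintype.card ι := by
  have hlin (j) : (Polynomial.C (γ j) * Polynomial.X + Polynomial.C 1).natDegree = 1 :=
    Polynomial.natDegree_linear (hγ j)
  rw [axisPoly, Polynomial.natDegree_prod _ _ fun j _ =>
    Polynomial.ne_zero_of_natDegree_gt (n := 0) (by rw [hlin]; exact one_pos)]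
  simp only [hlin, Finset.sum_const, Finset.card_univ, smul_eq_mul, mul_one]

theorem coeff_card_axisPoly (γ : ι → K) : (axisPoly γ).coeff (Fintype.card ι) = ∏ j, γ j := by
  have h := Polynomial.coeff_prod_of_natDegree_le Finset.univ
    (fun j => Polynomial.C (γ j) * Polynomial.X + Polynomial.C 1) 1 fun j _ => by compute_degree
  simpa [axisPoly, Polynomial.coeff_one] using h

theorem coeff_zero_axisPoly (γ : ι → K) : (axisPoly γ).coeff 0 = 1 := by
  simp [Polynomial.coeff_zero_eq_eval_zero, eval_axisPoly]

theorem roots_axisPoly {γ : ι → K} (hγ : ∀ j, γ j ≠ 0) :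
    (axisPoly γ).roots = Finset.univ.val.map fun j => -(γ j)⁻¹ := by
  have hne : axisPoly γ ≠ 0 := fun h => by simpa [h] using coeff_zero_axisPoly γ
  rw [axisPoly, Polynomial.roots_prod _ _ hne]
  simp [fun j => Polynomial.roots_C_mul_X_add_C 1 (hγ j), -map_one]

theorem exists_perm_of_axisPoly_eq {α β : ι → K} (hα : ∀ j, α j ≠ 0) (hβ : ∀ j, β j ≠ 0)
    (h : axisPoly α = axisPoly β) : ∃ σ : Equiv.Perm ι, ∀ j, β j = α (σ j) := by
  have hroots := congrArg Polynomial.roots h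
  rw [roots_axisPoly hα, roots_axisPoly hβ] at hroots
  obtain ⟨σ, hσ⟩ := exists_perm_of_map_univ_eq hroots
  exact ⟨σ, fun j => inv_injective (neg_injective (hσ j))⟩

end axisPoly

/-! ### Integration on the sphere -/

section StarBody
variable {E : Type*} [NormedAddCommGroup E] [NormedSpace ℝ E] [FiniteDimensional ℝ E]
  [Nontrivial E] [MeasurableSpace E] [BorelSpace E]

theorem measure_eq_lintegral_toSphere (μ : Measure E) [μ.IsAddHaarMeasure] {K : Set E}
    (hK : MeasurableSet K) {ρ : sphere (0 : E) 1 → ℝ} (hρ : ∀ θ, 0 < ρ θ)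
    (hKρ : ∀ θ : sphere (0 : E) 1, ∀ t, 0 < t → (t • (θ : E) ∈ K ↔ t < ρ θ)) :
    μ K = ∫⁻ θ, ENNReal.ofReal (ρ θ ^ Module.finrank ℝ E / Module.finrank ℝ E) ∂μ.toSphere := by
  have hdim : Module.finrank ℝ E - 1 + 1 = Module.finrank ℝ E :=
    Nat.sub_add_cancel Module.finrank_pos
  let K' : Set (sphere (0 : E) 1 × Ioi (0 : ℝ)) := {p | (p.2 : ℝ) • (p.1 : E) ∈ K}
  have hK' : MeasurableSet K' := hK.preimage (by fun_prop)
  have hpre : homeomorphUnitSphereProd E ⁻¹' K' = Subtype.val ⁻¹' K := by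
    ext x
    have hx : ‖(x : E)‖ ≠ 0 := norm_ne_zero_iff.2 x.2
    simp [K', smul_smul, mul_inv_cancel₀ hx]
  calc μ K = μ (K ∩ {0}ᶜ) := by
        rw [← sdiff_eq, measure_sdiff_null (measure_singleton _)]
    _ = μ.comap Subtype.val (Subtype.val ⁻¹' K : Set ({0}ᶜ : Set E)) := by
        rw [comap_subtype_coe_apply (measurableSet_singleton _).compl,
          Subtype.image_preimage_coe, inter_comm]
    _ = μ.toSphere.prod (.volumeIoiPow (Module.finrank ℝ E - 1)) K' := by
        rw [← hpre, μ.measurePreserving_homeomorphUnitSphereProd.measure_preimage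
          hK'.nullMeasurableSet]
    _ = ∫⁻ θ, Measure.volumeIoiPow (Module.finrank ℝ E - 1) (Iio ⟨ρ θ, hρ θ⟩) ∂μ.toSphere := by
        rw [Measure.prod_apply hK']
        refine lintegral_congr fun θ => congrArg _ ?_
        ext t
        exact hKρ θ t t.2
    _ = ∫⁻ θ, ENNReal.ofReal (ρ θ ^ Module.finrank ℝ E / Module.finrank ℝ E) ∂μ.toSphere := by
        simp_rw [Measure.volumeIoiPow_apply_Iio]
        norm_cast
        rw [hdim]

theorem finrank_mul_measureReal_eq_integral_toSphere (μ : Measure E) [μ.IsAddHaarMeasure]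
    {K : Set E} (hK : MeasurableSet K) {ρ : sphere (0 : E) 1 → ℝ} (hρ : ∀ θ, 0 < ρ θ)
    (hρm : Measurable ρ)
    (hKρ : ∀ θ : sphere (0 : E) 1, ∀ t, 0 < t → (t • (θ : E) ∈ K ↔ t < ρ θ)) :
    Module.finrank ℝ E * μ.real K = ∫ θ, ρ θ ^ Module.finrank ℝ E ∂μ.toSphere := by
  have hdim : (Module.finrank ℝ E : ℝ) ≠ 0 := mod_cast Module.finrank_pos.ne'
  have h0 (θ) : 0 ≤ ρ θ ^ Module.finrank ℝ E / Module.finrank ℝ E :=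
    div_nonneg (pow_nonneg (hρ θ).le _) (Nat.cast_nonneg _)
  rw [Measure.real, measure_eq_lintegral_toSphere μ hK hρ hKρ,
    ← integral_eq_lintegral_of_nonneg_ae (.of_forall h0) (by fun_prop), integral_div,
    mul_div_cancel₀ _ hdim]

end StarBody

instance (n : ℕ) : IsFiniteMeasure (sphereMeasure n) :=
  inferInstanceAs (IsFiniteMeasure (Measure.toSphere _))

instance (n : ℕ) [NeZero n] : NeZero (sphereMeasure n) :=
  ⟨Measure.toSphere_ne_zero _⟩

/-- The action of a linear isometric equivalence on the unit sphere. -/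
def sphereHomeomorph {E : Type*} [NormedAddCommGroup E] [NormedSpace ℝ E] (T : E ≃ₗᵢ[ℝ] E) :
    sphere (0 : E) 1 ≃ₜ sphere (0 : E) 1 :=
  T.toHomeomorph.subtype fun x => by simp

theorem measurePreserving_sphereHomeomorph {E : Type*} [NormedAddCommGroup E] [NormedSpace ℝ E]
    [MeasurableSpace E] [BorelSpace E] {T : E ≃ₗᵢ[ℝ] E} {μ : Measure E}
    (hT : MeasurePreserving T μ μ) :
    MeasurePreserving (sphereHomeomorph T) μ.toSphere μ.toSphere := by
  refine ⟨(sphereHomeomorph T).measurable, Measure.ext fun s hs => ?_⟩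
  have himage : Subtype.val '' s = T '' (Subtype.val '' (sphereHomeomorph T ⁻¹' s)) := by
    conv_lhs => rw [← image_preimage_eq s (sphereHomeomorph T).surjective]
    simp only [image_image]
    rfl
  have hsector : Ioo (0 : ℝ) 1 • (Subtype.val '' s) =
      T '' (Ioo (0 : ℝ) 1 • (Subtype.val '' (sphereHomeomorph T ⁻¹' s))) := by
    rw [himage]
    exact (image_image2_distrib_right fun r x => T.map_smul r x).symm
  rw [Measure.map_apply (sphereHomeomorph T).measurable hs, μ.toSphere_apply' hs,
    μ.toSphere_apply' ((sphereHomeomorph T).measurable hs), hsector,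
    ← hT.measure_preimage_emb T.toHomeomorph.measurableEmbedding (T '' _),
    preimage_image_eq _ T.injective]

theorem radial_image {n : ℕ} (T : EuclideanSpace ℝ (Fin n) ≃ₗᵢ[ℝ] EuclideanSpace ℝ (Fin n))
    (K : Set (EuclideanSpace ℝ (Fin n))) (x : EuclideanSpace ℝ (Fin n)) :
    radial (T '' K) (T x) = radial K x := by
  simp only [radial, ← T.map_smul, T.injective.mem_set_image]

theorem dualVolume_image {n : ℕ} (i : ℝ)
    (T : EuclideanSpace ℝ (Fin n) ≃ₗᵢ[ℝ] EuclideanSpace ℝ (Fin n))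
    (K : Set (EuclideanSpace ℝ (Fin n))) : dualVolume n i (T '' K) = dualVolume n i K := by
  rw [dualVolume, dualVolume, sphereMeasure,
    ← (measurePreserving_sphereHomeomorph T.measurePreserving).integral_comp
      (sphereHomeomorph T).measurableEmbedding]
  congr! 3 with θ
  exact congrArg (· ^ i) (radial_image T K θ)

/-- The diagonal quadratic form with coefficients `γ`. -/
def diagForm {ι : Type*} [Fintype ι] (γ : ι → ℝ) (x : EuclideanSpace ℝ ι) : ℝ :=
  ∑ j, γ j * x j ^ 2

section diagForm

variable {ι : Type*} [Fintype ι]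

theorem continuous_diagForm (γ : ι → ℝ) : Continuous (diagForm γ) := by
  unfold diagForm
  fun_prop

theorem diagForm_smul (γ : ι → ℝ) (t : ℝ) (x : EuclideanSpace ℝ ι) :
    diagForm γ (t • x) = t ^ 2 * diagForm γ x := by
  simp only [diagForm, PiLp.smul_apply, smul_eq_mul, Finset.mul_sum]
  exact Finset.sum_congr rfl fun j _ => by ring

theorem diagForm_pos {γ : ι → ℝ} (hγ : ∀ j, 0 < γ j) {x : EuclideanSpace ℝ ι} (hx : x ≠ 0) :
    0 < diagForm γ x := by
  obtain ⟨j, hj⟩ : ∃ j, x j ≠ 0 := by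
    contrapose! hx
    exact PiLp.ext hx
  exact Finset.sum_pos' (fun j _ => mul_nonneg (hγ j).le (sq_nonneg _))
    ⟨j, Finset.mem_univ j, mul_pos (hγ j) (sq_pos_of_ne_zero hj)⟩

theorem diagForm_sphere_pos {γ : ι → ℝ} (hγ : ∀ j, 0 < γ j)
    (θ : sphere (0 : EuclideanSpace ℝ ι) 1) : 0 < diagForm γ θ :=
  diagForm_pos hγ (ne_zero_of_mem_unit_sphere θ)

theorem diagForm_one_add_mul (γ : ι → ℝ) (t : ℝ) (θ : sphere (0 : EuclideanSpace ℝ ι) 1) :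
    diagForm (fun j => 1 + t * γ j) θ = 1 + t * diagForm γ θ := by
  have hθ : ∑ j, (θ : EuclideanSpace ℝ ι) j ^ 2 = 1 := by
    rw [← EuclideanSpace.real_norm_sq_eq, norm_eq_of_mem_sphere, one_pow]
  simp only [diagForm, add_mul, one_mul, Finset.sum_add_distrib, hθ, mul_assoc, ← Finset.mul_sum]

theorem integrable_diagForm_rpow {n : ℕ} {γ : Fin n → ℝ} (hγ : ∀ j, 0 < γ j) (p : ℝ) :
    Integrable (fun θ : sphere (0 : EuclideanSpace ℝ (Fin n)) 1 => diagForm γ θ ^ p)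
      (sphereMeasure n) :=
  Continuous.integrable_of_hasCompactSupport
    (((continuous_diagForm γ).comp continuous_subtype_val).rpow_const fun θ =>
      .inl (diagForm_sphere_pos hγ θ).ne') (HasCompactSupport.of_compactSpace _)

theorem measureReal_diagForm_lt_one {γ : ι → ℝ} (hγ : ∀ j, 0 < γ j) :
    volume.real {x | diagForm γ x < 1} =
      (√(∏ j, γ j))⁻¹ * volume.real (ball (0 : EuclideanSpace ℝ ι) 1) := by
  classical
  let f : EuclideanSpace ℝ ι →ₗ[ℝ] EuclideanSpace ℝ ι :=
    Matrix.toEuclideanLin (Matrix.diagonal fun j => √(γ j))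
  have hdet : LinearMap.det f = √(∏ j, γ j) := by
    simp [f, sqrt_prod _ fun j _ => (hγ j).le]
  have hdet0 : 0 < √(∏ j, γ j) := sqrt_pos.2 (Finset.prod_pos fun j _ => hγ j)
  have hpre : {x | diagForm γ x < 1} = f ⁻¹' ball 0 1 := by
    ext x
    simp [f, diagForm, EuclideanSpace.norm_eq, sqrt_lt', Matrix.toEuclideanLin,
      Matrix.mulVec_diagonal, mul_pow, sq_sqrt (hγ _).le]
  rw [hpre, Measure.real, Measure.addHaar_preimage_linearMap _ (hdet ▸ hdet0.ne'), hdet,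
    ENNReal.toReal_mul, abs_of_pos (inv_pos.2 hdet0), ENNReal.toReal_ofReal (by positivity),
    Measure.real]

end diagForm

theorem integral_diagForm_rpow_neg_half {n : ℕ} [NeZero n] {γ : Fin n → ℝ} (hγ : ∀ j, 0 < γ j) :
    ∫ θ : sphere (0 : EuclideanSpace ℝ (Fin n)) 1, diagForm γ θ ^ (-(n / 2 : ℝ))
      ∂sphereMeasure n = (sphereMeasure n).real univ * (√(∏ j, γ j))⁻¹ := by
  have hdim : Module.finrank ℝ (EuclideanSpace ℝ (Fin n)) = n := by simp
  have hpos := diagForm_sphere_pos hγ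
  have hmeas : Measurable fun θ : sphere (0 : EuclideanSpace ℝ (Fin n)) 1 => (√(diagForm γ θ))⁻¹ :=
    ((continuous_diagForm γ).comp continuous_subtype_val).measurable.sqrt.inv
  have hpow (θ : sphere (0 : EuclideanSpace ℝ (Fin n)) 1) :
      diagForm γ θ ^ (-(n / 2 : ℝ)) = (√(diagForm γ θ))⁻¹ ^ n := by
    rw [sqrt_eq_rpow, ← rpow_neg (hpos θ).le, ← rpow_natCast, ← rpow_mul (hpos θ).le]
    ring_nf
  simp_rw [hpow]
  have h := finrank_mul_measureReal_eq_integral_toSphere volume (K := {x | diagForm γ x < 1})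
    ((continuous_diagForm γ).measurable measurableSet_Iio)
    (fun θ => inv_pos.2 (sqrt_pos.2 (hpos θ))) hmeas fun θ t ht => ?_
  · rw [hdim] at h
    rw [sphereMeasure, ← h, measureReal_diagForm_lt_one hγ, Measure.toSphere_real_apply_univ, hdim]
    ring
  · have hsq : t ^ 2 * diagForm γ θ = (t * √(diagForm γ θ)) ^ 2 := by
      rw [mul_pow, sq_sqrt (hpos θ).le]
    rw [mem_ofPred_eq, diagForm_smul, hsq, sq_lt_one_iff₀ (by positivity), ← one_div,
      lt_div_iff₀ (sqrt_pos.2 (hpos θ))]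

/-! ### Mellin transforms -/

section Dilation

variable {k : ℝ → ℝ} {s c : ℝ}

theorem rpow_mul_comp_mul_right {t : ℝ} (ht : 0 < t) (hc : 0 < c) :
    t ^ (s - 1) * k (t * c) = c ^ (1 - s) * ((t * c) ^ (s - 1) * k (t * c)) := by
  rw [mul_rpow ht.le hc.le, ← neg_sub s 1, rpow_neg hc.le]
  field_simp

theorem integrableOn_rpow_mul_comp_mul_right (hc : 0 < c)
    (hk : IntegrableOn (fun t => t ^ (s - 1) * k t) (Ioi 0)) :
    IntegrableOn (fun t => t ^ (s - 1) * k (t * c)) (Ioi 0) := by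
  have h := (integrableOn_Ioi_comp_mul_right_iff (fun t => t ^ (s - 1) * k t) 0 hc).2 (by simpa)
  exact IntegrableOn.congr_fun (h.const_mul (c ^ (1 - s)))
    (fun t ht => (rpow_mul_comp_mul_right ht hc).symm) measurableSet_Ioi

theorem integral_rpow_mul_comp_mul_right (k : ℝ → ℝ) (s : ℝ) (hc : 0 < c) :
    ∫ t in Ioi 0, t ^ (s - 1) * k (t * c) = c ^ (-s) * ∫ t in Ioi 0, t ^ (s - 1) * k t := by
  rw [setIntegral_congr_fun measurableSet_Ioi fun t ht => rpow_mul_comp_mul_right ht hc,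
    integral_const_mul, integral_comp_mul_right_Ioi (fun t => t ^ (s - 1) * k t) 0 hc, zero_mul,
    smul_eq_mul, ← mul_assoc, ← div_eq_mul_inv, ← rpow_sub_one hc.ne']
  ring_nf

variable {X : Type*} [MeasurableSpace X] {μ : Measure X} {Q : X → ℝ}

theorem integrable_prod_rpow_mul_comp_mul (hQ : ∀ x, 0 < Q x) (hQm : Measurable Q)
    (hkm : Measurable k) (hQs : Integrable (fun x => Q x ^ (-s)) μ)
    (hk : IntegrableOn (fun t => t ^ (s - 1) * k t) (Ioi 0)) :
    Integrable (fun p : X × ℝ => p.2 ^ (s - 1) * k (p.2 * Q p.1))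
      (μ.prod (volume.restrict (Ioi 0))) := by
  have hmeas : Measurable fun p : X × ℝ => p.2 ^ (s - 1) * k (p.2 * Q p.1) := by fun_prop
  refine (integrable_prod_iff hmeas.aestronglyMeasurable).2
    ⟨.of_forall fun x => integrableOn_rpow_mul_comp_mul_right (hQ x) hk, ?_⟩
  have hnorm (x) : ∫ t in Ioi 0, ‖t ^ (s - 1) * k (t * Q x)‖ =
      Q x ^ (-s) * ∫ t in Ioi 0, t ^ (s - 1) * ‖k t‖ := by
    rw [← integral_rpow_mul_comp_mul_right (fun t => ‖k t‖) s (hQ x)]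
    refine setIntegral_congr_fun measurableSet_Ioi fun t (ht : 0 < t) => ?_
    rw [norm_mul, norm_of_nonneg (rpow_nonneg ht.le _)]
  simpa only [hnorm] using hQs.mul_const _

theorem integrableOn_rpow_mul_integral_comp_mul [SFinite μ] (hQ : ∀ x, 0 < Q x) (hQm : Measurable Q)
    (hkm : Measurable k) (hQs : Integrable (fun x => Q x ^ (-s)) μ)
    (hk : IntegrableOn (fun t => t ^ (s - 1) * k t) (Ioi 0)) :
    IntegrableOn (fun t => t ^ (s - 1) * ∫ x, k (t * Q x) ∂μ) (Ioi 0) := by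
  simpa only [IntegrableOn, integral_const_mul] using
    (integrable_prod_rpow_mul_comp_mul hQ hQm hkm hQs hk).integral_prod_right

theorem integral_rpow_mul_integral_comp_mul [SFinite μ] (hQ : ∀ x, 0 < Q x) (hQm : Measurable Q)
    (hkm : Measurable k) (hQs : Integrable (fun x => Q x ^ (-s)) μ)
    (hk : IntegrableOn (fun t => t ^ (s - 1) * k t) (Ioi 0)) :
    ∫ t in Ioi 0, t ^ (s - 1) * ∫ x, k (t * Q x) ∂μ =
      (∫ x, Q x ^ (-s) ∂μ) * ∫ t in Ioi 0, t ^ (s - 1) * k t := by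
  simp_rw [← integral_const_mul (μ := μ)]
  rw [← integral_integral_swap (integrable_prod_rpow_mul_comp_mul hQ hQm hkm hQs hk)]
  simp_rw [integral_rpow_mul_comp_mul_right k s (hQ _), integral_mul_const]

end Dilation

section OneAddPow

variable {s p : ℝ}

theorem hasDerivAt_one_add_rpow_zero (p : ℝ) :
    HasDerivAt (fun t : ℝ => (1 + t) ^ p) p 0 := by
  simpa using ((hasDerivAt_id (0 : ℝ)).const_add 1).rpow_const (p := p) (by simp)

theorem isBigO_one_add_rpow_neg_atTop (hp : 0 ≤ p) :
    (fun t : ℝ => (1 + t) ^ (-p)) =O[atTop] fun t => t ^ (-p) := by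
  refine .of_norm_eventuallyLE ?_
  filter_upwards [eventually_gt_atTop 0] with t ht
  rw [norm_of_nonneg (by positivity)]
  exact rpow_le_rpow_of_nonpos ht (by linarith) (by linarith)

theorem locallyIntegrableOn_one_add_rpow_sub_const (p c : ℝ) :
    LocallyIntegrableOn (fun t : ℝ => (1 + t) ^ p - c) (Ioi 0) :=
  ContinuousOn.locallyIntegrableOn (ContinuousOn.sub (ContinuousOn.rpow_const (by fun_prop)
    fun t (ht : 0 < t) => .inl (by positivity)) continuousOn_const) measurableSet_Ioi

theorem exists_integrableOn_rpow_mul_one_add_rpow_neg_sub (hs : -1 < s) (hs0 : s ≠ 0) (hp : 0 ≤ p)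
    (hsp : s < p) :
    ∃ c : ℝ, IntegrableOn (fun t : ℝ => t ^ (s - 1) * ((1 + t) ^ (-p) - c)) (Ioi 0) := by
  have hderiv := hasDerivAt_one_add_rpow_zero (-p)
  rcases hs0.lt_or_gt with hneg | hpos
  · refine ⟨1, mellin_convergent_of_isBigO_scalar (a := 0) (b := -1)
      (locallyIntegrableOn_one_add_rpow_sub_const _ _) ?_ hneg ?_ hs⟩
    · refine .of_bound 1 ?_
      filter_upwards [eventually_ge_atTop 0] with t ht
      have hle : (1 + t) ^ (-p) ≤ 1 := rpow_le_one_of_one_le_of_nonpos (by linarith) (by linarith)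
      have h0 : 0 ≤ (1 + t) ^ (-p) := by positivity
      rw [neg_zero, rpow_zero, norm_one, mul_one]
      exact abs_le.2 ⟨by linarith, by linarith⟩
    · simpa using hderiv.differentiableAt.isBigO_sub.mono nhdsWithin_le_nhds
  · refine ⟨0, mellin_convergent_of_isBigO_scalar (b := 0)
      (locallyIntegrableOn_one_add_rpow_sub_const _ _)
      (by simpa using isBigO_one_add_rpow_neg_atTop hp) hsp ?_ hpos⟩
    simpa using (hderiv.continuousAt.tendsto.mono_left nhdsWithin_le_nhds).isBigO_one ℝ

end OneAddPow

/-! ### Dual volumes of ellipsoids -/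

theorem radial_diagForm_le_one {n : ℕ} {γ : Fin n → ℝ} {x : EuclideanSpace ℝ (Fin n)}
    (hx : 0 < diagForm γ x) : radial {y | diagForm γ y ≤ 1} x = (√(diagForm γ x))⁻¹ := by
  have hset : {t : ℝ | 0 ≤ t ∧ t • x ∈ {y | diagForm γ y ≤ 1}} =
      Icc 0 (√(diagForm γ x))⁻¹ := by
    ext t
    refine and_congr_right fun ht => ?_
    have hsq : t ^ 2 * diagForm γ x = (t * √(diagForm γ x)) ^ 2 := by
      rw [mul_pow, sq_sqrt hx.le]
    rw [mem_ofPred_eq, diagForm_smul, hsq, sq_le_one_iff₀ (by positivity), ← one_div,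
      le_div_iff₀ (sqrt_pos.2 hx)]
  rw [radial, hset, csSup_Icc (by positivity)]

theorem ellipsoidSet_eq_diagForm_le_one {n : ℕ} (a : Fin n → ℝ) :
    ellipsoidSet a = {x | diagForm (fun j => (a j ^ 2)⁻¹) x ≤ 1} := by
  simp only [ellipsoidSet, diagForm, div_eq_inv_mul]

theorem dualVolume_ellipsoidSet {n : ℕ} {a : Fin n → ℝ} (ha : ∀ j, a j ≠ 0) (i : ℝ) :
    dualVolume n i (ellipsoidSet a) = 1 / n * ∫ θ : sphere (0 : EuclideanSpace ℝ (Fin n)) 1,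
      diagForm (fun j => (a j ^ 2)⁻¹) θ ^ (-(i / 2)) ∂sphereMeasure n := by
  rw [dualVolume, ellipsoidSet_eq_diagForm_le_one]
  congr! 3 with θ
  have hθ := diagForm_sphere_pos (fun j => inv_pos.2 (sq_pos_of_ne_zero (ha j))) θ
  rw [radial_diagForm_le_one hθ, sqrt_eq_rpow, ← rpow_neg hθ.le, ← rpow_mul hθ.le]
  ring_nf

theorem exists_linearIsometryEquiv_image_ellipsoidSet {n : ℕ} (a : Fin n → ℝ)
    (σ : Equiv.Perm (Fin n)) :
    ∃ T : EuclideanSpace ℝ (Fin n) ≃ₗᵢ[ℝ] EuclideanSpace ℝ (Fin n),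
      ellipsoidSet (a ∘ σ) = T '' ellipsoidSet a := by
  refine ⟨LinearIsometryEquiv.piLpCongrLeft 2 ℝ ℝ σ.symm, ?_⟩
  rw [LinearIsometryEquiv.image_eq_preimage_symm]
  ext x
  simp only [ellipsoidSet, mem_ofPred_eq, mem_preimage, Function.comp_apply]
  rw [← Equiv.sum_comp σ fun j =>
    ((LinearIsometryEquiv.piLpCongrLeft 2 ℝ ℝ σ.symm).symm x) j ^ 2 / a j ^ 2]
  simp

section SphereIntegrals

variable {n : ℕ} [NeZero n] {α β γ : Fin n → ℝ} {s : ℝ}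

theorem integral_one_add_mul_diagForm_rpow_sub (hγ : ∀ j, 0 < γ j) (c : ℝ) {t : ℝ} (ht : 0 ≤ t) :
    ∫ θ : sphere (0 : EuclideanSpace ℝ (Fin n)) 1, ((1 + t * diagForm γ θ) ^ (-(n / 2 : ℝ)) - c)
      ∂sphereMeasure n =
      (sphereMeasure n).real univ * ((√((axisPoly γ).eval t))⁻¹ - c) := by
  have hpos (j) : 0 < 1 + t * γ j := add_pos_of_pos_of_nonneg one_pos (mul_nonneg ht (hγ j).le)
  have hint := integrable_diagForm_rpow hpos (-(n / 2 : ℝ))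
  simp_rw [← diagForm_one_add_mul]
  rw [integral_sub hint (integrable_const c), integral_diagForm_rpow_neg_half hpos,
    eval_axisPoly, integral_const, smul_eq_mul, mul_sub]

theorem integrableOn_rpow_mul_inv_sqrt_axisPoly_sub (hγ : ∀ j, 0 < γ j) {c : ℝ}
    (hk : IntegrableOn (fun t => t ^ (s - 1) * ((1 + t) ^ (-(n / 2 : ℝ)) - c)) (Ioi 0)) :
    IntegrableOn (fun t => t ^ (s - 1) * ((√((axisPoly γ).eval t))⁻¹ - c)) (Ioi 0) := by
  have h := integrableOn_rpow_mul_integral_comp_mul (diagForm_sphere_pos hγ)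
    ((continuous_diagForm γ).comp continuous_subtype_val).measurable (by fun_prop)
    (integrable_diagForm_rpow hγ (-s)) hk
  refine IntegrableOn.congr_fun (h.const_mul ((sphereMeasure n).real univ)⁻¹)
    (fun t ht => ?_) measurableSet_Ioi
  have hσ : (sphereMeasure n).real univ ≠ 0 := measureReal_univ_ne_zero
  simp only [integral_one_add_mul_diagForm_rpow_sub hγ c (le_of_lt ht)]
  field_simp

theorem integral_rpow_mul_inv_sqrt_axisPoly_sub (hγ : ∀ j, 0 < γ j) {c : ℝ}
    (hk : IntegrableOn (fun t => t ^ (s - 1) * ((1 + t) ^ (-(n / 2 : ℝ)) - c)) (Ioi 0)) :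
    (sphereMeasure n).real univ *
        ∫ t in Ioi 0, t ^ (s - 1) * ((√((axisPoly γ).eval t))⁻¹ - c) =
      (∫ θ : sphere (0 : EuclideanSpace ℝ (Fin n)) 1, diagForm γ θ ^ (-s) ∂sphereMeasure n) *
        ∫ t in Ioi 0, t ^ (s - 1) * ((1 + t) ^ (-(n / 2 : ℝ)) - c) := by
  rw [← integral_rpow_mul_integral_comp_mul (diagForm_sphere_pos hγ)
    ((continuous_diagForm γ).comp continuous_subtype_val).measurable (by fun_prop)
    (integrable_diagForm_rpow hγ (-s)) hk, ← integral_const_mul]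
  refine setIntegral_congr_fun measurableSet_Ioi fun t ht => ?_
  simp only [integral_one_add_mul_diagForm_rpow_sub hγ c (le_of_lt ht)]
  ring

theorem integral_rpow_mul_inv_sqrt_axisPoly_sub_eq_zero (hα : ∀ j, 0 < α j) (hβ : ∀ j, 0 < β j)
    (hs : -1 < s) (hs0 : s ≠ 0) (hsn : s < n / 2)
    (h : ∫ θ : sphere (0 : EuclideanSpace ℝ (Fin n)) 1, diagForm α θ ^ (-s) ∂sphereMeasure n =
      ∫ θ : sphere (0 : EuclideanSpace ℝ (Fin n)) 1, diagForm β θ ^ (-s) ∂sphereMeasure n) :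
    ∫ t in Ioi 0, t ^ (s - 1) * ((√((axisPoly α).eval t))⁻¹ - (√((axisPoly β).eval t))⁻¹) =
      0 := by
  obtain ⟨c, hk⟩ := exists_integrableOn_rpow_mul_one_add_rpow_neg_sub hs hs0 (by positivity) hsn
  have heq : ∫ t in Ioi 0, t ^ (s - 1) * ((√((axisPoly α).eval t))⁻¹ - c) =
      ∫ t in Ioi 0, t ^ (s - 1) * ((√((axisPoly β).eval t))⁻¹ - c) := by
    refine mul_left_cancel₀ (measureReal_univ_ne_zero (μ := sphereMeasure n)) ?_
    rw [integral_rpow_mul_inv_sqrt_axisPoly_sub hα hk,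
      integral_rpow_mul_inv_sqrt_axisPoly_sub hβ hk, h]
  rw [← sub_eq_zero, ← integral_sub (integrableOn_rpow_mul_inv_sqrt_axisPoly_sub hα hk)
    (integrableOn_rpow_mul_inv_sqrt_axisPoly_sub hβ hk)] at heq
  simpa only [← mul_sub, sub_sub_sub_cancel_right] using heq

theorem prod_eq_of_integral_diagForm_rpow_neg_half_eq (hα : ∀ j, 0 < α j) (hβ : ∀ j, 0 < β j)
    (h : ∫ θ : sphere (0 : EuclideanSpace ℝ (Fin n)) 1, diagForm α θ ^ (-(n / 2 : ℝ))
        ∂sphereMeasure n =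
      ∫ θ : sphere (0 : EuclideanSpace ℝ (Fin n)) 1, diagForm β θ ^ (-(n / 2 : ℝ))
        ∂sphereMeasure n) :
    ∏ j, α j = ∏ j, β j := by
  rwa [integral_diagForm_rpow_neg_half hα, integral_diagForm_rpow_neg_half hβ,
    mul_right_inj' measureReal_univ_ne_zero, inv_inj,
    sqrt_inj (Finset.prod_nonneg fun j _ => (hα j).le)
      (Finset.prod_nonneg fun j _ => (hβ j).le)] at h

theorem axisPoly_eq_of_integral_diagForm_rpow_eq (hα : ∀ j, 0 < α j) (hβ : ∀ j, 0 < β j)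
    {S : Finset ℝ} (hSn : #S = n) (hS : ∀ s ∈ S, s ≠ 0 ∧ -1 < s ∧ s ≤ n / 2)
    (h : ∀ s ∈ S,
      ∫ θ : sphere (0 : EuclideanSpace ℝ (Fin n)) 1, diagForm α θ ^ (-s) ∂sphereMeasure n =
      ∫ θ : sphere (0 : EuclideanSpace ℝ (Fin n)) 1, diagForm β θ ^ (-s) ∂sphereMeasure n) :
    axisPoly α = axisPoly β := by
  have hdeg {γ : Fin n → ℝ} (hγ : ∀ j, 0 < γ j) : (axisPoly γ).natDegree = n :=
    (natDegree_axisPoly fun j => (hγ j).ne').trans (Fintype.card_fin n)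
  have hlead (γ : Fin n → ℝ) : (axisPoly γ).coeff n = ∏ j, γ j := by
    simpa using coeff_card_axisPoly γ
  have hsub : (axisPoly β - axisPoly α).natDegree ≤ n :=
    (Polynomial.natDegree_sub_le_of_le (hdeg hβ).le (hdeg hα).le).trans_eq (max_self n)
  refine polynomial_eq_of_integral_inv_sqrt_sub_eq_zero (S := S.erase (n / 2))
    (fun t => eval_axisPoly_pos hα) (fun t => eval_axisPoly_pos hβ) (hdeg hα).ge (hdeg hβ).ge
    (by rw [coeff_zero_axisPoly, coeff_zero_axisPoly]) (S.card_erase_le.trans_eq hSn) ?_ ?_ ?_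
  · by_cases hn : (n / 2 : ℝ) ∈ S
    · have hprod := prod_eq_of_integral_diagForm_rpow_neg_half_eq hα hβ (h _ hn)
      rw [Finset.card_erase_of_mem hn, hSn]
      refine Polynomial.natDegree_le_pred hsub ?_
      rw [Polynomial.coeff_sub, hlead, hlead, hprod, sub_self]
    · rwa [Finset.erase_eq_of_notMem hn, hSn]
  · intro s hs
    obtain ⟨hne, hmem⟩ := Finset.mem_erase.1 hs
    exact ⟨(hS s hmem).2.1, (hS s hmem).2.2.lt_of_ne hne⟩
  · intro s hs
    obtain ⟨hne, hmem⟩ := Finset.mem_erase.1 hs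
    obtain ⟨hs0, hs1, hsn⟩ := hS s hmem
    exact integral_rpow_mul_inv_sqrt_axisPoly_sub_eq_zero hα hβ hs1 hs0 (hsn.lt_of_ne hne)
      (h s hmem)

end SphereIntegrals

theorem exists_perm_of_dualVolume_ellipsoidSet_eq {n : ℕ} [NeZero n] {a b : Fin n → ℝ}
    (ha : ∀ j, 0 < a j) (hb : ∀ j, 0 < b j) {I : Finset ℝ} (hIn : #I = n)
    (hI : ∀ i ∈ I, i ≠ 0 ∧ -2 < i ∧ i ≤ n)
    (h : ∀ i ∈ I, dualVolume n i (ellipsoidSet a) = dualVolume n i (ellipsoidSet b)) :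
    ∃ σ : Equiv.Perm (Fin n), b = a ∘ σ := by
  have hn0 : (1 / n : ℝ) ≠ 0 := one_div_ne_zero (NeZero.ne _)
  have hpos {c : Fin n → ℝ} (hc : ∀ j, 0 < c j) (j) : 0 < (c j ^ 2)⁻¹ :=
    inv_pos.2 (pow_pos (hc j) 2)
  have hcard : #(I.image (· / 2)) = n := by
    rw [Finset.card_image_of_injective _ fun _ _ => (div_left_inj' two_ne_zero).1, hIn]
  have heq := axisPoly_eq_of_integral_diagForm_rpow_eq (hpos ha) (hpos hb) hcard
    (Finset.forall_mem_image.2 fun i hi => ?_) (Finset.forall_mem_image.2 fun i hi => ?_)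
  · obtain ⟨σ, hσ⟩ := exists_perm_of_axisPoly_eq (fun j => (hpos ha j).ne')
      (fun j => (hpos hb j).ne') heq
    exact ⟨σ, funext fun j =>
      (pow_left_inj₀ (hb j).le (ha _).le two_ne_zero).1 (inv_injective (hσ j))⟩
  · obtain ⟨h0, h1, h2⟩ := hI i hi
    exact ⟨div_ne_zero h0 two_ne_zero, by linarith, by linarith⟩
  · have hdual := h i hi
    rw [dualVolume_ellipsoidSet fun j => (ha j).ne',
      dualVolume_ellipsoidSet fun j => (hb j).ne'] at hdual
    exact mul_left_cancel₀ hn0 hdual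

/-- Two centered ellipsoids in `ℝⁿ`, `n ≥ 2`, with equal dual volumes `Ṽ_{i_1}, …, Ṽ_{i_n}`
for `n` distinct nonzero real indices in `(-2, n]` are congruent; equivalently, their
multisets of semiaxes coincide. -/
theorem dualVolumes_determine_ellipsoid_general_indices
    (n : ℕ) (hn : 2 ≤ n) (a b : Fin n → ℝ)
    (ha : ∀ j, 0 < a j) (hb : ∀ j, 0 < b j)
    (T₁ T₂ : EuclideanSpace ℝ (Fin n) ≃ₗᵢ[ℝ] EuclideanSpace ℝ (Fin n))
    (E₁ E₂ : Set (EuclideanSpace ℝ (Fin n)))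
    (hE₁ : E₁ = T₁ '' ellipsoidSet a) (hE₂ : E₂ = T₂ '' ellipsoidSet b)
    (i : Fin n → ℝ) (hinj : Function.Injective i)
    (hi0 : ∀ k, i k ≠ 0) (hilb : ∀ k, -2 < i k) (hiub : ∀ k, i k ≤ n)
    (h : ∀ k, dualVolume n (i k) E₁ = dualVolume n (i k) E₂) :
    (∃ T : EuclideanSpace ℝ (Fin n) ≃ₗᵢ[ℝ] EuclideanSpace ℝ (Fin n), E₂ = T '' E₁) ∧
      ∃ σ : Equiv.Perm (Fin n), ∀ j, b j = a (σ j) := by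
  have : NeZero n := ⟨by lia⟩
  subst hE₁ hE₂
  simp only [dualVolume_image] at h
  obtain ⟨σ, rfl⟩ := exists_perm_of_dualVolume_ellipsoidSet_eq ha hb
    (I := Finset.univ.image i) (by rw [Finset.card_image_of_injective _ hinj, Finset.card_fin])
    (by simpa using fun k => ⟨hi0 k, hilb k, hiub k⟩) (by simpa using h)
  obtain ⟨T, hT⟩ := exists_linearIsometryEquiv_image_ellipsoidSet a σ
  refine ⟨⟨(T₁.symm.trans T).trans T₂, ?_⟩, σ, fun j => rfl⟩
  rw [hT]
  simp [image_image]
end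

section
/- Let n ≥ 4 be even and let 1 ≤ k ≤ n−1 with k ≠ n/2. For t > 0 and 1 ≤ m ≤ n−1 define J_m(t) = t^m · ∫_{S^{n-1}} ( t^{−2n}(θ₁² + ⋯ + θ_m²) + θ_{m+1}² + ⋯ + θₙ² )^{1/2} dθ (spherical Lebesgue measure). If a, b > 0 satisfy J_{n/2}(a) = J_{n/2}(b) and J_k(a) = J_k(b), then a = b. (Equivalently: when n is even, the intrinsic volumes Vₙ, V_{n/2}, and V_k, for any k different from n and n/2, uniquely determine an ellipsoid of revolution in ℝⁿ up to an isometry.) -/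
open MeasureTheory Real Set

/-- `J_m(t) = t^m ∫_{S^{n-1}} ( t^{-2n}(θ₁²+⋯+θ_m²) + θ_{m+1}²+⋯+θₙ² )^{1/2} dθ`;
up to a constant, the `m`-th intrinsic volume of the ellipsoid of revolution with
semiaxes `(t,…,t,t^{1-n})`. -/
noncomputable def Jfun (n m : ℕ) (t : ℝ) : ℝ :=
  t ^ m * ∫ θ : Metric.sphere (0 : EuclideanSpace ℝ (Fin n)) 1,
    Real.sqrt (∑ j : Fin n, (if (j : ℕ) < m then (t ^ (2 * n))⁻¹ else 1) *
      ((θ : EuclideanSpace ℝ (Fin n)) j) ^ 2) ∂(sphereMeasure n)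

/-!
Up to a positive constant, `A ^ (1/2)` is `∫₀^∞ u ^ (-3/2) (1 - exp (-u A)) du`. Averaging this over
a Gaussian vector, and separating the radial part, turns `J_k(t)` into a nonnegative multiple of
`∫₀^∞ u ^ (-3/2) (1 - D(u) ^ (-1/2)) du`, where `D(u) = (1 + u y⁻ˡ)ᵏ (1 + u yᵏ)ˡ`, `y = t²` and
`l = n - k`; the multiple does not depend on `t`.

For `k = l = m` the integrand is a strictly increasing function of `yᵐ + y⁻ᵐ`, so `J_m(a) = J_m(b)`
leaves only `a = b` and `a = b⁻¹`. Replacing `t` by `t⁻¹` exchanges `k` and `l` in `D`, and so does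
`u ↦ u⁻¹` up to the factor `uⁿ`. Symmetrising the integral under `u ↦ u⁻¹` therefore reduces
`J_k(t) ≠ J_k(t⁻¹)` to comparing the two products for `0 < u < 1`; the comparison follows from the
strict convexity of `x ↦ log ((1 + u eˣ) / (1 + u e⁻ˣ))` on `[0, ∞)`.
-/

/-- The symmetrised integrand `g u + u⁻² g u⁻¹` of an integral over `(0, ∞)` with respect to the
substitution `u ↦ u⁻¹`; it has twice the integral of `g`. -/
noncomputable def invSymmetrization (g : ℝ → ℝ) (u : ℝ) : ℝ :=
  g u + (u ^ 2)⁻¹ * g u⁻¹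

theorem invSymmetrization_inv (g : ℝ → ℝ) {u : ℝ} (hu : 0 < u) :
    invSymmetrization g u⁻¹ = u ^ 2 * invSymmetrization g u := by
  simp only [invSymmetrization, inv_inv, inv_pow]
  field_simp
  ring

theorem abs_neg_one_mul_rpow_smul_comp_inv (g : ℝ → ℝ) {u : ℝ} (hu : 0 < u) :
    (|(-1 : ℝ)| * u ^ ((-1 : ℝ) - 1)) • g (u ^ (-1 : ℝ)) = (u ^ 2)⁻¹ * g u⁻¹ := by
  have hpow : u ^ ((-1 : ℝ) - 1) = (u ^ 2)⁻¹ := by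
    rw [show (-1 : ℝ) - 1 = -(2 : ℕ) by norm_num, rpow_neg hu.le, rpow_natCast]
  rw [hpow, rpow_neg_one, abs_neg, abs_one, one_mul, smul_eq_mul]

theorem integrableOn_Ioi_comp_inv {g : ℝ → ℝ} (hg : IntegrableOn g (Ioi 0)) :
    IntegrableOn (fun u ↦ (u ^ 2)⁻¹ * g u⁻¹) (Ioi 0) :=
  ((integrableOn_Ioi_comp_rpow_iff g (by norm_num : (-1 : ℝ) ≠ 0)).2 hg).congr_fun
    (fun _ hu ↦ abs_neg_one_mul_rpow_smul_comp_inv g hu) measurableSet_Ioi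

theorem integral_Ioi_comp_inv (g : ℝ → ℝ) :
    ∫ u in Ioi (0 : ℝ), (u ^ 2)⁻¹ * g u⁻¹ = ∫ u in Ioi (0 : ℝ), g u := by
  rw [← integral_comp_rpow_Ioi g (by norm_num : (-1 : ℝ) ≠ 0)]
  exact setIntegral_congr_fun measurableSet_Ioi fun _ hu ↦
    (abs_neg_one_mul_rpow_smul_comp_inv g hu).symm

theorem setIntegral_pos_of_ae_pos {α : Type*} [MeasurableSpace α] {μ : Measure α} {t : Set α}
    {f : α → ℝ} (ht : μ t ≠ 0) (hf : IntegrableOn f t μ) (hpos : ∀ᵐ x ∂μ.restrict t, 0 < f x) :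
    0 < ∫ x in t, f x ∂μ := by
  have hnonneg : 0 ≤ᵐ[μ.restrict t] f := hpos.mono fun _ hx ↦ hx.le
  refine (integral_nonneg_of_ae hnonneg).lt_of_ne' fun hzero ↦ ht ?_
  have hae := (integral_eq_zero_iff_of_nonneg_ae hnonneg hf).1 hzero
  rw [← Measure.restrict_eq_zero, ← ae_eq_bot, ← Filter.eventually_false_iff_eq_bot]
  filter_upwards [hpos, hae] with x hx hx0 using hx.ne' hx0

theorem integral_Ioi_pos_of_invSymmetrization_pos {g : ℝ → ℝ} (hg : IntegrableOn g (Ioi 0))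
    (hpos : ∀ u, 0 < u → u < 1 → 0 < invSymmetrization g u) : 0 < ∫ u in Ioi (0 : ℝ), g u := by
  have hne_one : ∀ u, 0 < u → u ≠ 1 → 0 < invSymmetrization g u := by
    intro u hu hu1
    rcases hu1.lt_or_gt with hlt | hgt
    · exact hpos u hu hlt
    · have hinv := hpos u⁻¹ (inv_pos.2 hu) (inv_lt_one_of_one_lt₀ hgt)
      rw [invSymmetrization_inv g hu] at hinv
      exact pos_of_mul_pos_right hinv (sq_nonneg u)
  have hsymm_int : IntegrableOn (invSymmetrization g) (Ioi 0) :=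
    hg.add (integrableOn_Ioi_comp_inv hg)
  have hsymm_pos : 0 < ∫ u in Ioi (0 : ℝ), invSymmetrization g u := by
    refine setIntegral_pos_of_ae_pos (by simp) hsymm_int ?_
    filter_upwards [ae_restrict_mem measurableSet_Ioi,
      ae_restrict_of_ae (Measure.ae_ne volume (1 : ℝ))] with u hu hu1
    exact hne_one u hu hu1
  have htwice : ∫ u in Ioi (0 : ℝ), invSymmetrization g u = 2 * ∫ u in Ioi (0 : ℝ), g u := by
    simp only [invSymmetrization]
    rw [integral_add hg (integrableOn_Ioi_comp_inv hg), integral_Ioi_comp_inv, two_mul]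
  linarith

/-- The integrand of `marchaud`. -/
noncomputable def marchaudIntegrand (s : ℝ) (f : ℝ → ℝ) (u : ℝ) : ℝ :=
  u ^ (-1 - s) * (1 - f u)

/-- The (unnormalised) Marchaud fractional derivative of order `s` at `0` of a function `f` on
`[0, ∞)` with `f 0 = 1`. -/
noncomputable def marchaud (s : ℝ) (f : ℝ → ℝ) : ℝ :=
  ∫ u in Ioi (0 : ℝ), marchaudIntegrand s f u

section Marchaud

variable {s : ℝ} {f g : ℝ → ℝ}

theorem integrableOn_marchaudIntegrand {A : ℝ} (hs0 : 0 < s) (hs1 : s < 1) (hf : Measurable f)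
    (hf0 : ∀ u, 0 < u → 0 ≤ f u) (hf1 : ∀ u, 0 < u → f u ≤ 1)
    (hA : ∀ u, 0 < u → 1 - u * A ≤ f u) : IntegrableOn (marchaudIntegrand s f) (Ioi 0) := by
  have hmeas : Measurable (marchaudIntegrand s f) := by unfold marchaudIntegrand; fun_prop
  have hnorm : ∀ u, 0 < u → ‖marchaudIntegrand s f u‖ = u ^ (-1 - s) * (1 - f u) := fun u hu ↦
    norm_of_nonneg (mul_nonneg (rpow_nonneg hu.le _) (sub_nonneg.2 (hf1 u hu)))
  rw [← Ioc_union_Ioi_eq_Ioi (zero_le_one (α := ℝ))]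
  refine IntegrableOn.union ?near_zero ?near_top
  case near_zero =>
    have hdom : IntegrableOn (fun u : ℝ ↦ u ^ (-s) * A) (Ioc 0 1) :=
      (intervalIntegral.intervalIntegrable_rpow' (by linarith)).1.mul_const A
    refine Integrable.mono' hdom hmeas.aestronglyMeasurable ?_
    filter_upwards [ae_restrict_mem measurableSet_Ioc] with u ⟨hu, _⟩
    calc ‖marchaudIntegrand s f u‖ = u ^ (-1 - s) * (1 - f u) := hnorm u hu
      _ ≤ u ^ (-1 - s) * (u * A) := by
        gcongr
        linarith [hA u hu]
      _ = u ^ (-s) * A := by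
        rw [← mul_assoc, ← rpow_add_one hu.ne']
        ring_nf
  case near_top =>
    have hdom : IntegrableOn (fun u : ℝ ↦ u ^ (-1 - s)) (Ioi 1) :=
      integrableOn_Ioi_rpow_of_lt (by linarith) one_pos
    refine Integrable.mono' hdom hmeas.aestronglyMeasurable ?_
    filter_upwards [ae_restrict_mem measurableSet_Ioi] with u hu
    have hu0 : 0 < u := one_pos.trans hu
    rw [hnorm u hu0]
    exact mul_le_of_le_one_right (rpow_nonneg hu0.le _) (by linarith [hf0 u hu0])

theorem marchaud_nonneg (hf : ∀ u, 0 < u → f u ≤ 1) : 0 ≤ marchaud s f :=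
  setIntegral_nonneg measurableSet_Ioi fun u hu ↦
    mul_nonneg (rpow_nonneg (le_of_lt hu) _) (sub_nonneg.2 (hf u hu))

theorem marchaud_comp_mul_right {A : ℝ} (hA : 0 < A) :
    marchaud s (fun u ↦ f (u * A)) = A ^ s * marchaud s f := by
  have hscale : ∀ u ∈ Ioi (0 : ℝ), marchaudIntegrand s (fun u ↦ f (u * A)) u =
      A ^ (1 + s) * marchaudIntegrand s f (u * A) := by
    intro u hu
    have hcancel : A ^ (1 + s) * A ^ (-1 - s) = 1 := by
      rw [← rpow_add hA, show 1 + s + (-1 - s) = 0 by ring, rpow_zero]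
    simp only [marchaudIntegrand]
    rw [mul_rpow (le_of_lt hu) hA.le]
    linear_combination -(u ^ (-1 - s) * (1 - f (u * A))) * hcancel
  rw [marchaud, setIntegral_congr_fun measurableSet_Ioi hscale, integral_const_mul,
    integral_comp_mul_right_Ioi _ _ hA, zero_mul, rpow_add hA, rpow_one, smul_eq_mul, marchaud]
  field_simp

theorem marchaud_exp_neg_mul {A : ℝ} (hs : s ≠ 0) (hA : 0 ≤ A) :
    marchaud s (fun u ↦ rexp (-(u * A))) = A ^ s * marchaud s (fun u ↦ rexp (-u)) := by
  rcases hA.eq_or_lt with rfl | hA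
  · simp [marchaud, marchaudIntegrand, zero_rpow hs]
  · exact marchaud_comp_mul_right (f := fun u ↦ rexp (-u)) hA

theorem marchaud_sub_marchaud (hf : IntegrableOn (marchaudIntegrand s f) (Ioi 0))
    (hg : IntegrableOn (marchaudIntegrand s g) (Ioi 0)) :
    marchaud s g - marchaud s f = ∫ u in Ioi (0 : ℝ), u ^ (-1 - s) * (f u - g u) := by
  rw [marchaud, marchaud, ← integral_sub hg hf]
  congr 1 with u
  simp only [marchaudIntegrand]
  ring

theorem integrableOn_rpow_mul_sub (hf : IntegrableOn (marchaudIntegrand s f) (Ioi 0))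
    (hg : IntegrableOn (marchaudIntegrand s g) (Ioi 0)) :
    IntegrableOn (fun u ↦ u ^ (-1 - s) * (f u - g u)) (Ioi 0) := by
  refine (hg.sub hf).congr (ae_of_all _ fun u ↦ ?_)
  simp only [marchaudIntegrand, Pi.sub_apply]
  ring

theorem marchaud_lt_marchaud (hf : IntegrableOn (marchaudIntegrand s f) (Ioi 0))
    (hg : IntegrableOn (marchaudIntegrand s g) (Ioi 0)) (hlt : ∀ u, 0 < u → g u < f u) :
    marchaud s f < marchaud s g := by
  rw [← sub_pos, marchaud_sub_marchaud hf hg]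
  refine setIntegral_pos_of_ae_pos (by simp) (integrableOn_rpow_mul_sub hf hg) ?_
  filter_upwards [ae_restrict_mem measurableSet_Ioi] with u hu
  exact mul_pos (rpow_pos_of_pos hu _) (sub_pos.2 (hlt u hu))

theorem marchaud_lt_marchaud_of_comp_inv {r : ℝ} (hr : 0 < 2 * s + r)
    (hf : IntegrableOn (marchaudIntegrand s f) (Ioi 0))
    (hg : IntegrableOn (marchaudIntegrand s g) (Ioi 0))
    (hinv : ∀ u, 0 < u → f u⁻¹ = u ^ r * g u) (hlt : ∀ u, 0 < u → u < 1 → g u < f u) :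
    marchaud s f < marchaud s g := by
  rw [← sub_pos, marchaud_sub_marchaud hf hg]
  refine integral_Ioi_pos_of_invSymmetrization_pos (integrableOn_rpow_mul_sub hf hg)
    fun u hu hu1 ↦ ?_
  have hginv : g u⁻¹ = u ^ r * f u := by
    have h := hinv u⁻¹ (inv_pos.2 hu)
    rw [inv_inv, inv_rpow hu.le] at h
    rw [h, mul_inv_cancel_left₀ (rpow_pos_of_pos hu r).ne']
  have hpow : (u ^ 2)⁻¹ * u⁻¹ ^ (-1 - s) * u ^ r = u ^ (-1 + s + r) := by
    rw [inv_rpow hu.le, ← rpow_neg hu.le, ← rpow_natCast, ← rpow_neg hu.le, ← rpow_add hu,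
      ← rpow_add hu]
    push_cast
    ring_nf
  have hfactor : invSymmetrization (fun u ↦ u ^ (-1 - s) * (f u - g u)) u =
      (u ^ (-1 - s) - u ^ (-1 + s + r)) * (f u - g u) := by
    rw [invSymmetrization, hinv u hu, hginv, ← hpow]
    ring
  rw [hfactor]
  exact mul_pos (sub_pos.2 (rpow_lt_rpow_of_exponent_gt hu hu1 (by linarith)))
    (sub_pos.2 (hlt u hu hu1))

end Marchaud

theorem integral_mul_fun_norm_of_homogeneous {E : Type*} [NormedAddCommGroup E] [NormedSpace ℝ E]
    [FiniteDimensional ℝ E] [Nontrivial E] [MeasurableSpace E] [BorelSpace E] (μ : Measure E)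
    [μ.IsAddHaarMeasure] {f : E → ℝ} {d : ℝ} (hf : ∀ r : ℝ, 0 < r → ∀ x, f (r • x) = r ^ d * f x)
    (g : ℝ → ℝ) :
    ∫ x, f x * g ‖x‖ ∂μ = (∫ θ : Metric.sphere (0 : E) 1, f θ ∂μ.toSphere) *
      ∫ r : Ioi (0 : ℝ), (r : ℝ) ^ d * g r
        ∂Measure.volumeIoiPow (Module.finrank ℝ E - 1) := by
  calc ∫ x, f x * g ‖x‖ ∂μ = ∫ x : ({0}ᶜ : Set E), f x * g ‖(x : E)‖ ∂μ.comap (↑) := by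
        rw [integral_subtype_comap (measurableSet_singleton _).compl fun x ↦ f x * g ‖x‖,
          restrict_compl_singleton]
    _ = ∫ p : Metric.sphere (0 : E) 1 × Ioi (0 : ℝ), f p.1 * ((p.2 : ℝ) ^ d * g p.2)
          ∂μ.toSphere.prod (Measure.volumeIoiPow (Module.finrank ℝ E - 1)) := by
        rw [← μ.measurePreserving_homeomorphUnitSphereProd.integral_comp
          (Homeomorph.measurableEmbedding _)]
        congr 1 with x
        have hx : 0 < ‖(x : E)‖ := norm_pos_iff.2 x.2
        rw [homeomorphUnitSphereProd_apply_fst_coe, homeomorphUnitSphereProd_apply_snd_coe,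
          ← mul_assoc, mul_comm (f (‖(x : E)‖⁻¹ • (x : E))), ← hf _ hx, smul_inv_smul₀ hx.ne']
    _ = _ := integral_prod_mul (fun θ : Metric.sphere (0 : E) 1 ↦ f θ)
        fun r : Ioi (0 : ℝ) ↦ (r : ℝ) ^ d * g r

theorem one_add_mul_pos {u a : ℝ} (hu : 0 ≤ u) (ha : 0 ≤ a) : 0 < 1 + u * a :=
  add_pos_of_pos_of_nonneg one_pos (mul_nonneg hu ha)

section Gaussian

variable {ι : Type*} [Fintype ι]

theorem integrable_exp_neg_sum_mul_sq {c : ι → ℝ} (hc : ∀ j, 0 < c j) :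
    Integrable fun x : EuclideanSpace ℝ ι ↦ rexp (-∑ j, c j * x j ^ 2) := by
  have hprod : Integrable fun x : ι → ℝ ↦ ∏ j, rexp (-c j * x j ^ 2) :=
    Integrable.fintype_prod fun j ↦ integrable_exp_neg_mul_sq (hc j)
  simp only [← exp_sum, neg_mul, Finset.sum_neg_distrib] at hprod
  exact (PiLp.volume_preserving_ofLp ι).integrable_comp_of_integrable hprod

theorem integral_exp_neg_sum_mul_sq {c : ι → ℝ} (hc : ∀ j, 0 < c j) :
    ∫ x : EuclideanSpace ℝ ι, rexp (-∑ j, c j * x j ^ 2) =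
      √π ^ Fintype.card ι * (∏ j, c j) ^ (-1 / 2 : ℝ) := by
  have hfactor : ∀ j, ∫ t : ℝ, rexp (-c j * t ^ 2) = √π * c j ^ (-1 / 2 : ℝ) := fun j ↦ by
    rw [integral_gaussian, sqrt_div' _ (hc j).le, div_eq_mul_inv, neg_div, rpow_neg (hc j).le,
      ← sqrt_eq_rpow]
  calc ∫ x : EuclideanSpace ℝ ι, rexp (-∑ j, c j * x j ^ 2)
      = ∫ x : ι → ℝ, ∏ j, rexp (-c j * x j ^ 2) := by
        rw [← (PiLp.volume_preserving_ofLp ι).integral_comp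
          (MeasurableEquiv.toLp 2 (ι → ℝ)).symm.measurableEmbedding]
        simp only [← exp_sum, neg_mul, Finset.sum_neg_distrib]
    _ = ∏ j, ∫ t : ℝ, rexp (-c j * t ^ 2) :=
        integral_fintype_prod_volume_eq_prod fun j (t : ℝ) ↦ rexp (-c j * t ^ 2)
    _ = √π ^ Fintype.card ι * (∏ j, c j) ^ (-1 / 2 : ℝ) := by
        simp only [hfactor]
        rw [Finset.prod_mul_distrib, Finset.prod_const, Finset.card_univ,
          finsetProd_rpow _ _ fun j _ ↦ (hc j).le]

/-- The Laplace transform `u ↦ π^{-n/2} ∫ exp (-u ∑ wⱼ xⱼ²) exp (-‖x‖²) dx` of the quadratic form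
with coefficients `w` under the Gaussian measure, in closed form. -/
noncomputable def gaussianLaplace (w : ι → ℝ) (u : ℝ) : ℝ :=
  (∏ j, (1 + u * w j)) ^ (-1 / 2 : ℝ)

variable {w : ι → ℝ} {s u : ℝ}

theorem sum_mul_sq_nonneg (hw : ∀ j, 0 ≤ w j) (x : EuclideanSpace ℝ ι) :
    0 ≤ ∑ j, w j * x j ^ 2 :=
  Finset.sum_nonneg fun j _ ↦ mul_nonneg (hw j) (sq_nonneg _)

theorem gaussianLaplace_nonneg (hw : ∀ j, 0 ≤ w j) (hu : 0 ≤ u) : 0 ≤ gaussianLaplace w u :=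
  rpow_nonneg (Finset.prod_nonneg fun j _ ↦ (one_add_mul_pos hu (hw j)).le) _

theorem gaussianLaplace_le_one (hw : ∀ j, 0 ≤ w j) (hu : 0 ≤ u) : gaussianLaplace w u ≤ 1 :=
  rpow_le_one_of_one_le_of_nonpos
    (Finset.one_le_prod fun j _ ↦ le_add_of_nonneg_right (mul_nonneg hu (hw j))) (by norm_num)

theorem exp_neg_mul_le_gaussianLaplace (hw : ∀ j, 0 ≤ w j) (hu : 0 ≤ u) :
    rexp (-(u * ((∑ j, w j) / 2))) ≤ gaussianLaplace w u := by
  have hprod : ∏ j, (1 + u * w j) ≤ rexp (u * ∑ j, w j) := by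
    rw [Finset.mul_sum, exp_sum]
    exact Finset.prod_le_prod (fun j _ ↦ (one_add_mul_pos hu (hw j)).le) fun j _ ↦ by
      linarith [add_one_le_exp (u * w j)]
  calc rexp (-(u * ((∑ j, w j) / 2))) = rexp (u * ∑ j, w j) ^ (-1 / 2 : ℝ) := by
        rw [← exp_mul]
        ring_nf
    _ ≤ gaussianLaplace w u :=
        rpow_le_rpow_of_nonpos (Finset.prod_pos fun j _ ↦ one_add_mul_pos hu (hw j)) hprod
          (by norm_num)

theorem integrableOn_marchaudIntegrand_gaussianLaplace (hs0 : 0 < s) (hs1 : s < 1)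
    (hw : ∀ j, 0 ≤ w j) : IntegrableOn (marchaudIntegrand s (gaussianLaplace w)) (Ioi 0) := by
  refine integrableOn_marchaudIntegrand (A := (∑ j, w j) / 2) hs0 hs1
    (by unfold gaussianLaplace; fun_prop) (fun u hu ↦ gaussianLaplace_nonneg hw hu.le)
    (fun u hu ↦ gaussianLaplace_le_one hw hu.le) fun u hu ↦ ?_
  linarith [add_one_le_exp (-(u * ((∑ j, w j) / 2))), exp_neg_mul_le_gaussianLaplace hw hu.le]

theorem one_sub_exp_mul_exp_neg_norm_sq (w : ι → ℝ) (u : ℝ) (x : EuclideanSpace ℝ ι) :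
    (1 - rexp (-(u * ∑ j, w j * x j ^ 2))) * rexp (-‖x‖ ^ 2) =
      rexp (-∑ j, (1 : ι → ℝ) j * x j ^ 2) - rexp (-∑ j, (1 + u * w j) * x j ^ 2) := by
  simp only [EuclideanSpace.real_norm_sq_eq, sub_mul, ← exp_add, add_mul, Pi.one_apply, one_mul,
    Finset.sum_add_distrib, Finset.mul_sum, mul_assoc, neg_add_rev]

theorem integrable_one_sub_exp_mul_exp_neg_norm_sq (hw : ∀ j, 0 ≤ w j) (hu : 0 ≤ u) :
    Integrable fun x : EuclideanSpace ℝ ι ↦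
      (1 - rexp (-(u * ∑ j, w j * x j ^ 2))) * rexp (-‖x‖ ^ 2) := by
  simp only [one_sub_exp_mul_exp_neg_norm_sq]
  exact (integrable_exp_neg_sum_mul_sq fun _ ↦ one_pos).sub
    (integrable_exp_neg_sum_mul_sq fun j ↦ one_add_mul_pos hu (hw j))

theorem integral_one_sub_exp_mul_exp_neg_norm_sq (hw : ∀ j, 0 ≤ w j) (hu : 0 ≤ u) :
    ∫ x : EuclideanSpace ℝ ι, (1 - rexp (-(u * ∑ j, w j * x j ^ 2))) * rexp (-‖x‖ ^ 2) =
      √π ^ Fintype.card ι * (1 - gaussianLaplace w u) := by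
  have hone : ∀ j, 0 < (1 : ι → ℝ) j := fun _ ↦ one_pos
  have hpos : ∀ j, 0 < 1 + u * w j := fun j ↦ one_add_mul_pos hu (hw j)
  simp only [one_sub_exp_mul_exp_neg_norm_sq]
  rw [integral_sub (integrable_exp_neg_sum_mul_sq hone) (integrable_exp_neg_sum_mul_sq hpos),
    integral_exp_neg_sum_mul_sq hone, integral_exp_neg_sum_mul_sq hpos, gaussianLaplace]
  simp only [Pi.one_apply, Finset.prod_const_one, one_rpow]
  ring

theorem integrable_marchaudIntegrand_exp_mul_exp_neg_norm_sq (hs0 : 0 < s) (hs1 : s < 1)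
    (hw : ∀ j, 0 ≤ w j) :
    Integrable (fun p : EuclideanSpace ℝ ι × ℝ ↦
      marchaudIntegrand s (fun u ↦ rexp (-(u * ∑ j, w j * p.1 j ^ 2))) p.2 * rexp (-‖p.1‖ ^ 2))
      (volume.prod (volume.restrict (Ioi 0))) := by
  simp only [marchaudIntegrand, mul_assoc]
  refine (integrable_prod_iff' (Measurable.aestronglyMeasurable (by fun_prop))).2 ⟨?_, ?_⟩
  · filter_upwards [ae_restrict_mem measurableSet_Ioi] with u hu
    exact (integrable_one_sub_exp_mul_exp_neg_norm_sq hw (le_of_lt hu)).const_mul _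
  · refine ((integrableOn_marchaudIntegrand_gaussianLaplace hs0 hs1 hw).const_mul
      (√π ^ Fintype.card ι)).congr ?_
    filter_upwards [ae_restrict_mem measurableSet_Ioi] with u hu
    have hexp : ∀ x : EuclideanSpace ℝ ι, rexp (-(u * ∑ j, w j * x j ^ 2)) ≤ 1 := fun x ↦
      exp_le_one_iff.2 (neg_nonpos.2 (mul_nonneg (le_of_lt hu) (sum_mul_sq_nonneg hw x)))
    have hnorm : ∀ x : EuclideanSpace ℝ ι,
        ‖u ^ (-1 - s) * ((1 - rexp (-(u * ∑ j, w j * x j ^ 2))) * rexp (-‖x‖ ^ 2))‖ =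
          u ^ (-1 - s) * ((1 - rexp (-(u * ∑ j, w j * x j ^ 2))) * rexp (-‖x‖ ^ 2)) := fun x ↦
      norm_of_nonneg (mul_nonneg (rpow_nonneg (le_of_lt hu) _)
        (mul_nonneg (sub_nonneg.2 (hexp x)) (exp_pos _).le))
    simp only [hnorm]
    rw [integral_const_mul, integral_one_sub_exp_mul_exp_neg_norm_sq hw (le_of_lt hu),
      marchaudIntegrand]
    ring

theorem marchaud_gaussianLaplace (hs0 : 0 < s) (hs1 : s < 1) (hw : ∀ j, 0 ≤ w j) :
    √π ^ Fintype.card ι * marchaud s (gaussianLaplace w) =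
      marchaud s (fun u ↦ rexp (-u)) *
        ∫ x : EuclideanSpace ℝ ι, (∑ j, w j * x j ^ 2) ^ s * rexp (-‖x‖ ^ 2) := by
  have hinner : ∀ u ∈ Ioi (0 : ℝ), √π ^ Fintype.card ι * marchaudIntegrand s (gaussianLaplace w) u =
      ∫ x : EuclideanSpace ℝ ι,
        marchaudIntegrand s (fun u ↦ rexp (-(u * ∑ j, w j * x j ^ 2))) u * rexp (-‖x‖ ^ 2) := by
    intro u hu
    simp only [marchaudIntegrand, mul_assoc]
    rw [integral_const_mul, integral_one_sub_exp_mul_exp_neg_norm_sq hw (le_of_lt hu)]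
    ring
  rw [marchaud, ← integral_const_mul, setIntegral_congr_fun measurableSet_Ioi hinner,
    ← integral_integral_swap (integrable_marchaudIntegrand_exp_mul_exp_neg_norm_sq hs0 hs1 hw),
    ← integral_const_mul]
  congr 1 with x
  rw [integral_mul_const]
  change marchaud s _ * _ = _
  rw [marchaud_exp_neg_mul hs0.ne' (sum_mul_sq_nonneg hw x)]
  ring

theorem exists_marchaud_gaussianLaplace_eq_mul_integral_sphere [Nonempty ι] (hs0 : 0 < s)
    (hs1 : s < 1) : ∃ c : ℝ, 0 ≤ c ∧ ∀ w : ι → ℝ, (∀ j, 0 ≤ w j) →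
      marchaud s (gaussianLaplace w) =
        c * ∫ θ : Metric.sphere (0 : EuclideanSpace ℝ ι) 1,
          (∑ j, w j * (θ : EuclideanSpace ℝ ι) j ^ 2) ^ s ∂volume.toSphere := by
  set radial : ℝ := ∫ r : Ioi (0 : ℝ), (r : ℝ) ^ (2 * s) * rexp (-(r : ℝ) ^ 2)
    ∂Measure.volumeIoiPow (Module.finrank ℝ (EuclideanSpace ℝ ι) - 1)
  have hradial_nonneg : 0 ≤ radial := integral_nonneg fun r ↦
    mul_nonneg (rpow_nonneg (le_of_lt r.2) _) (exp_pos _).le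
  have hexp_nonneg : 0 ≤ marchaud s fun u ↦ rexp (-u) :=
    marchaud_nonneg fun u hu ↦ exp_le_one_iff.2 (neg_nonpos.2 hu.le)
  refine ⟨(√π ^ Fintype.card ι)⁻¹ * (marchaud s (fun u ↦ rexp (-u)) * radial), by positivity,
    fun w hw ↦ ?_⟩
  have hhom : ∀ r : ℝ, 0 < r → ∀ x : EuclideanSpace ℝ ι,
      (∑ j, w j * (r • x) j ^ 2) ^ s = r ^ (2 * s) * (∑ j, w j * x j ^ 2) ^ s := by
    intro r hr x
    rw [rpow_mul hr.le, rpow_two, ← mul_rpow (sq_nonneg r) (sum_mul_sq_nonneg hw x),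
      Finset.mul_sum]
    congr 2 with j
    rw [PiLp.smul_apply, smul_eq_mul]
    ring
  have hpolar := integral_mul_fun_norm_of_homogeneous volume
    (f := fun x : EuclideanSpace ℝ ι ↦ (∑ j, w j * x j ^ 2) ^ s) hhom fun r ↦ rexp (-r ^ 2)
  rw [mul_assoc, eq_inv_mul_iff_mul_eq₀ (by positivity), marchaud_gaussianLaplace hs0 hs1 hw,
    hpolar]
  ring

end Gaussian

section LogRatio

/-- `log ((1 + u eˣ) / (1 + u e⁻ˣ))`, as a function of `x`. -/
noncomputable def logRatio (u x : ℝ) : ℝ :=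
  log (1 + u * rexp x) - log (1 + u * rexp (-x))

variable {u : ℝ}

theorem hasDerivAt_logRatio (hu : 0 ≤ u) (x : ℝ) :
    HasDerivAt (logRatio u) (1 - (1 - u ^ 2) / (1 + u ^ 2 + 2 * u * cosh x)) x := by
  have hpos := one_add_mul_pos hu (exp_pos x).le
  have hneg := one_add_mul_pos hu (exp_pos (-x)).le
  have hden : 1 + u ^ 2 + 2 * u * cosh x = (1 + u * rexp x) * (1 + u * rexp (-x)) := by
    have hexp : rexp x * rexp (-x) = 1 := by rw [← exp_add, add_neg_cancel, exp_zero]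
    rw [cosh_eq]
    linear_combination -u ^ 2 * hexp
  have hderiv := ((((hasDerivAt_exp x).const_mul u).const_add 1).log hpos.ne').sub
    ((((hasDerivAt_neg x).exp.const_mul u).const_add 1).log hneg.ne')
  refine hderiv.congr_deriv ?_
  rw [hden]
  field_simp
  rw [exp_neg]
  field_simp
  ring

theorem strictConvexOn_logRatio (hu : 0 < u) (hu1 : u < 1) :
    StrictConvexOn ℝ (Ici 0) (logRatio u) := by
  refine StrictMonoOn.strictConvexOn_of_deriv (convex_Ici 0)
    (fun x _ ↦ (hasDerivAt_logRatio hu.le x).continuousAt.continuousWithinAt) ?_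
  rw [interior_Ici]
  intro x (hx : 0 < x) y (hy : 0 < y) hxy
  rw [(hasDerivAt_logRatio hu.le x).deriv, (hasDerivAt_logRatio hu.le y).deriv]
  have hcosh : cosh x < cosh y := by rwa [cosh_lt_cosh, abs_of_pos hx, abs_of_pos hy]
  have hnum : 0 < 1 - u ^ 2 := sub_pos.2 (pow_lt_one₀ hu.le hu1 two_ne_zero)
  gcongr

theorem mul_logRatio_lt_mul_logRatio (hu : 0 < u) (hu1 : u < 1) {x y : ℝ} (hx : 0 < x)
    (hxy : x < y) : y * logRatio u x < x * logRatio u y := by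
  have hy := hx.trans hxy
  have hslope := (strictConvexOn_logRatio hu hu1).secant_strict_mono (a := 0) (x := x) (y := y)
    self_mem_Ici hx.le hy.le hx.ne' hy.ne' hxy
  have hzero : logRatio u 0 = 0 := by rw [logRatio, neg_zero, sub_self]
  rw [hzero, sub_zero, sub_zero, sub_zero, sub_zero, div_lt_div_iff₀ hx hy] at hslope
  linarith

end LogRatio

section ShapeDet

/-- `det (1 + u A)` for the diagonal matrix `A` of determinant `1` with `k` entries `y⁻ˡ` and `l`
entries `yᵏ`. For `y = t²` these are the coefficients of the quadratic form under the square root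
in `Jfun (k + l) k t`, once the factor `tᵏ` is moved inside. -/
noncomputable def shapeDet (k l : ℕ) (y u : ℝ) : ℝ :=
  (1 + u * (y ^ l)⁻¹) ^ k * (1 + u * y ^ k) ^ l

variable {k l m : ℕ} {y u : ℝ}

theorem shapeDet_inv (k l : ℕ) (y u : ℝ) : shapeDet k l y⁻¹ u = shapeDet l k y u := by
  simp only [shapeDet, inv_pow, inv_inv, mul_comm]

theorem shapeDet_pos (k l : ℕ) (hy : 0 < y) (hu : 0 ≤ u) : 0 < shapeDet k l y u := by
  unfold shapeDet
  positivity

theorem shapeDet_comp_inv (k l : ℕ) (hy : 0 < y) (hu : 0 < u) :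
    shapeDet k l y u⁻¹ = (u ^ (k + l))⁻¹ * shapeDet l k y u := by
  have hleft : 1 + u⁻¹ * (y ^ l)⁻¹ = u⁻¹ * (y ^ l)⁻¹ * (1 + u * y ^ l) := by field_simp; ring
  have hright : 1 + u⁻¹ * y ^ k = u⁻¹ * y ^ k * (1 + u * (y ^ k)⁻¹) := by field_simp; ring
  simp only [shapeDet, hleft, hright, mul_pow, pow_add, inv_pow, ← pow_mul, mul_comm l k]
  field_simp

theorem shapeDet_self (m : ℕ) (hy : 0 < y) (u : ℝ) :
    shapeDet m m y u = (1 + u ^ 2 + u * (y ^ m + (y ^ m)⁻¹)) ^ m := by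
  rw [shapeDet, ← mul_pow]
  congr 1
  field_simp
  ring

theorem log_shapeDet (k l : ℕ) (hy : 0 < y) (hu : 0 ≤ u) :
    log (shapeDet k l y u) =
      k * log (1 + u * rexp (-(l * log y))) + l * log (1 + u * rexp (k * log y)) := by
  have hexp : ∀ j : ℕ, rexp (j * log y) = y ^ j := fun j ↦ by rw [exp_nat_mul, exp_log hy]
  rw [exp_neg, hexp, hexp, shapeDet, log_mul (by positivity) (by positivity), log_pow, log_pow]

theorem shapeDet_lt_shapeDet_swap (hk : 0 < k) (hkl : k < l) (hy : 1 < y) (hu : 0 < u)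
    (hu1 : u < 1) : shapeDet k l y u < shapeDet l k y u := by
  have hy0 : 0 < y := one_pos.trans hy
  have hlog : 0 < log y := log_pos hy
  have hslope : l * log y * logRatio u (k * log y) < k * log y * logRatio u (l * log y) :=
    mul_logRatio_lt_mul_logRatio hu hu1 (by positivity) (by gcongr)
  have hslope' : l * logRatio u (k * log y) < k * logRatio u (l * log y) :=
    lt_of_mul_lt_mul_left (by linarith) hlog.le
  rw [← log_lt_log_iff (shapeDet_pos k l hy0 hu.le) (shapeDet_pos l k hy0 hu.le),
    log_shapeDet k l hy0 hu.le, log_shapeDet l k hy0 hu.le]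
  simp only [logRatio] at hslope'
  linarith

/-- The Marchaud derivative of `u ↦ det (1 + u A) ^ (-1/2)`, with `A` as in `shapeDet`. -/
noncomputable def shapeMarchaud (s : ℝ) (k l : ℕ) (y : ℝ) : ℝ :=
  marchaud s fun u ↦ shapeDet k l y u ^ (-1 / 2 : ℝ)

/-- The diagonal entries of the matrix `A` in `shapeDet`. -/
noncomputable def shapeWeight (k l : ℕ) (y : ℝ) (j : Fin (k + l)) : ℝ :=
  if (j : ℕ) < k then (y ^ l)⁻¹ else y ^ k

theorem shapeWeight_nonneg (k l : ℕ) (hy : 0 ≤ y) (j : Fin (k + l)) : 0 ≤ shapeWeight k l y j := by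
  unfold shapeWeight
  split_ifs <;> positivity

theorem gaussianLaplace_shapeWeight (k l : ℕ) (y : ℝ) :
    gaussianLaplace (shapeWeight k l y) = fun u ↦ shapeDet k l y u ^ (-1 / 2 : ℝ) := by
  ext u
  simp [gaussianLaplace, shapeWeight, shapeDet, Fin.prod_univ_add]

variable {s : ℝ}

theorem integrableOn_marchaudIntegrand_shapeDet (k l : ℕ) (hs0 : 0 < s) (hs1 : s < 1)
    (hy : 0 ≤ y) :
    IntegrableOn (marchaudIntegrand s fun u ↦ shapeDet k l y u ^ (-1 / 2 : ℝ)) (Ioi 0) := by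
  rw [← gaussianLaplace_shapeWeight]
  exact integrableOn_marchaudIntegrand_gaussianLaplace hs0 hs1 (shapeWeight_nonneg k l hy)

theorem shapeMarchaud_lt_shapeMarchaud_swap (hs0 : 0 < s) (hs1 : s < 1) (hk : 0 < k) (hkl : k < l)
    (hy : 1 < y) : shapeMarchaud s k l y < shapeMarchaud s l k y := by
  have hy0 : 0 < y := one_pos.trans hy
  refine marchaud_lt_marchaud_of_comp_inv (r := (k + l : ℕ) / 2) (by positivity)
    (integrableOn_marchaudIntegrand_shapeDet k l hs0 hs1 hy0.le)
    (integrableOn_marchaudIntegrand_shapeDet l k hs0 hs1 hy0.le) (fun u hu ↦ ?_)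
    fun u hu hu1 ↦ rpow_lt_rpow_of_neg (shapeDet_pos k l hy0 hu.le)
      (shapeDet_lt_shapeDet_swap hk hkl hy hu hu1) (by norm_num)
  have hpow : (u ^ (k + l))⁻¹ ^ (-1 / 2 : ℝ) = u ^ (((k + l : ℕ) : ℝ) / 2) := by
    rw [← rpow_natCast, ← rpow_neg hu.le, ← rpow_mul hu.le]
    ring_nf
  rw [shapeDet_comp_inv k l hy0 hu, mul_rpow (by positivity) (shapeDet_pos l k hy0 hu.le).le, hpow]

theorem shapeMarchaud_self_lt (hs0 : 0 < s) (hs1 : s < 1) (hm : m ≠ 0) {y z : ℝ} (hy : 0 < y)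
    (hz : 0 < z) (hyz : y ^ m + (y ^ m)⁻¹ < z ^ m + (z ^ m)⁻¹) :
    shapeMarchaud s m m y < shapeMarchaud s m m z := by
  refine marchaud_lt_marchaud (integrableOn_marchaudIntegrand_shapeDet m m hs0 hs1 hy.le)
    (integrableOn_marchaudIntegrand_shapeDet m m hs0 hs1 hz.le) fun u hu ↦
      rpow_lt_rpow_of_neg (shapeDet_pos m m hy hu.le) ?_ (by norm_num)
  rw [shapeDet_self m hy, shapeDet_self m hz]
  gcongr

end ShapeDet

section Jfun

variable {k l m : ℕ} {a b t : ℝ}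

theorem Jfun_eq_integral_shapeWeight (k l : ℕ) (ht : 0 < t) :
    Jfun (k + l) k t = ∫ θ : Metric.sphere (0 : EuclideanSpace ℝ (Fin (k + l))) 1,
      (∑ j, shapeWeight k l (t ^ 2) j * (θ : EuclideanSpace ℝ (Fin (k + l))) j ^ 2) ^ (1 / 2 : ℝ)
        ∂volume.toSphere := by
  have hweight : ∀ j : Fin (k + l), shapeWeight k l (t ^ 2) j =
      (t ^ k) ^ 2 * if (j : ℕ) < k then (t ^ (2 * (k + l)))⁻¹ else 1 := by
    intro j
    unfold shapeWeight
    split_ifs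
    · rw [← pow_mul, ← pow_mul, mul_add, pow_add, mul_comm k 2]
      field_simp
    · ring
  rw [Jfun, sphereMeasure, ← integral_const_mul]
  congr 1 with θ
  simp only [hweight, mul_assoc]
  rw [← Finset.mul_sum, ← sqrt_eq_rpow, sqrt_mul (sq_nonneg _), sqrt_sq (pow_nonneg ht.le k)]

theorem exists_shapeMarchaud_eq_mul_Jfun (hkl : k + l ≠ 0) : ∃ c : ℝ, 0 ≤ c ∧ ∀ t, 0 < t →
    shapeMarchaud (1 / 2) k l (t ^ 2) = c * Jfun (k + l) k t := by
  have : Nonempty (Fin (k + l)) := Fin.pos_iff_nonempty.1 (Nat.pos_of_ne_zero hkl)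
  obtain ⟨c, hc, hsphere⟩ := exists_marchaud_gaussianLaplace_eq_mul_integral_sphere
    (ι := Fin (k + l)) (s := 1 / 2) (by norm_num) (by norm_num)
  refine ⟨c, hc, fun t ht ↦ ?_⟩
  rw [Jfun_eq_integral_shapeWeight k l ht, ← hsphere _ (shapeWeight_nonneg k l (sq_nonneg t)),
    gaussianLaplace_shapeWeight, shapeMarchaud]

theorem Jfun_lt_Jfun_of_shapeMarchaud_lt (hkl : k + l ≠ 0) (ha : 0 < a) (hb : 0 < b)
    (hlt : shapeMarchaud (1 / 2) k l (a ^ 2) < shapeMarchaud (1 / 2) k l (b ^ 2)) :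
    Jfun (k + l) k a < Jfun (k + l) k b := by
  obtain ⟨c, hc, hJ⟩ := exists_shapeMarchaud_eq_mul_Jfun hkl
  rw [hJ a ha, hJ b hb] at hlt
  exact lt_of_mul_lt_mul_left hlt hc

theorem Jfun_ne_Jfun_inv_of_one_lt (hk : 0 < k) (hl : 0 < l) (hkl : k ≠ l) (ht : 1 < t) :
    Jfun (k + l) k t ≠ Jfun (k + l) k t⁻¹ := by
  have ht0 : 0 < t := one_pos.trans ht
  have hsq : 1 < t ^ 2 := one_lt_pow₀ ht two_ne_zero
  have hn : k + l ≠ 0 := by omega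
  have hinv : shapeMarchaud (1 / 2) k l (t⁻¹ ^ 2) = shapeMarchaud (1 / 2) l k (t ^ 2) := by
    simp only [shapeMarchaud, inv_pow, shapeDet_inv]
  rcases hkl.lt_or_gt with hlt | hgt
  · refine (Jfun_lt_Jfun_of_shapeMarchaud_lt hn ht0 (inv_pos.2 ht0) ?_).ne
    rw [hinv]
    exact shapeMarchaud_lt_shapeMarchaud_swap (by norm_num) (by norm_num) hk hlt hsq
  · refine (Jfun_lt_Jfun_of_shapeMarchaud_lt hn (inv_pos.2 ht0) ht0 ?_).ne'
    rw [hinv]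
    exact shapeMarchaud_lt_shapeMarchaud_swap (by norm_num) (by norm_num) hl hgt hsq

theorem Jfun_ne_Jfun_inv (hk : 0 < k) (hl : 0 < l) (hkl : k ≠ l) (ht : 0 < t) (ht1 : t ≠ 1) :
    Jfun (k + l) k t ≠ Jfun (k + l) k t⁻¹ := by
  rcases ht1.lt_or_gt with hlt | hgt
  · have h := Jfun_ne_Jfun_inv_of_one_lt hk hl hkl ((one_lt_inv₀ ht).2 hlt)
    rw [inv_inv] at h
    exact h.symm
  · exact Jfun_ne_Jfun_inv_of_one_lt hk hl hkl hgt

theorem Jfun_half_lt_Jfun_half (hm : m ≠ 0) (ha : 0 < a) (hb : 0 < b)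
    (hlt : (a ^ 2) ^ m + ((a ^ 2) ^ m)⁻¹ < (b ^ 2) ^ m + ((b ^ 2) ^ m)⁻¹) :
    Jfun (m + m) m a < Jfun (m + m) m b :=
  Jfun_lt_Jfun_of_shapeMarchaud_lt (by omega) ha hb
    (shapeMarchaud_self_lt (by norm_num) (by norm_num) hm (pow_pos ha 2) (pow_pos hb 2) hlt)

theorem eq_or_eq_inv_of_add_inv_eq_add_inv {K : Type*} [Field K] {x y : K} (hx : x ≠ 0)
    (hy : y ≠ 0) (h : x + x⁻¹ = y + y⁻¹) : x = y ∨ x = y⁻¹ := by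
  have hfactor : (x - y) * (x * y - 1) = 0 := by
    field_simp at h
    linear_combination h
  rcases mul_eq_zero.1 hfactor with hsub | hmul
  · exact Or.inl (sub_eq_zero.1 hsub)
  · exact Or.inr (eq_inv_of_mul_eq_one_left (sub_eq_zero.1 hmul))

theorem eq_or_eq_inv_of_Jfun_half_eq (hm : m ≠ 0) (ha : 0 < a) (hb : 0 < b)
    (h : Jfun (m + m) m a = Jfun (m + m) m b) : a = b ∨ a = b⁻¹ := by
  have hsum : (a ^ 2) ^ m + ((a ^ 2) ^ m)⁻¹ = (b ^ 2) ^ m + ((b ^ 2) ^ m)⁻¹ :=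
    le_antisymm (not_lt.1 fun hlt ↦ (Jfun_half_lt_Jfun_half hm hb ha hlt).ne' h)
      (not_lt.1 fun hlt ↦ (Jfun_half_lt_Jfun_half hm ha hb hlt).ne h)
  have hexp : 2 * m ≠ 0 := mul_ne_zero two_ne_zero hm
  rw [← pow_mul, ← pow_mul] at hsum
  refine (eq_or_eq_inv_of_add_inv_eq_add_inv (by positivity) (by positivity) hsum).imp
    (pow_left_inj₀ ha.le hb.le hexp).1 fun hinv ↦ ?_
  rw [← inv_pow] at hinv
  exact (pow_left_inj₀ ha.le (inv_nonneg.2 hb.le) hexp).1 hinv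

end Jfun

/-- For even `n = 2m ≥ 4`, the intrinsic volumes `Vₙ`, `V_{n/2}` and `V_k`
(`k ≠ n, n/2`) uniquely determine an ellipsoid of revolution: `J_{n/2}(a) = J_{n/2}(b)`
and `J_k(a) = J_k(b)` force `a = b`. -/
theorem revolution_ellipsoid_unique_even_dim
    (n m : ℕ) (hnm : n = 2 * m) (hn : 4 ≤ n)
    (k : ℕ) (hk1 : 1 ≤ k) (hk2 : k ≤ n - 1) (hkm : k ≠ m)
    (a b : ℝ) (ha : 0 < a) (hb : 0 < b)
    (h1 : Jfun n m a = Jfun n m b)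
    (h2 : Jfun n k a = Jfun n k b) :
    a = b := by
  subst hnm
  rw [two_mul] at h1
  rcases eq_or_eq_inv_of_Jfun_half_eq (by omega) ha hb h1 with hab | rfl
  · exact hab
  obtain ⟨l, hl⟩ : ∃ l, 2 * m = k + l := ⟨2 * m - k, by omega⟩
  rw [hl] at h2
  by_contra hne
  have hb1 : b ≠ 1 := fun hb1 ↦ hne (by rw [hb1, inv_one])
  exact Jfun_ne_Jfun_inv hk1 (by omega) (by omega) hb hb1 h2.symm
end
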